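/- Every irreducible reduced divisorial cone in Pⁿ over a rational variety (i.e. a cone whose general hyperplane section is a rational variety) is Cremona equivalent to a hyperplane. -/

import Mathlib

/-!
Concrete framework: projective space over a field `k` as `Projectivization`,
hypersurfaces as zero loci of homogeneous polynomials, rational maps given by
tuples of homogeneous polynomials, birational maps between (closed) subvarieties,
and Cremona equivalence of divisors.
-/

open MvPolynomial

/-- Projective `n`-space over `k`, as the projectivization of `k^{n+1}`. -/
abbrev ProjSp (k : Type) [Field k] (n : ℕ) : Type :=
  Projectivization k (Fin (n + 1) → k)

namespace ProjSp

variable (k : Type) [Field k]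

/-- The zero locus in `ℙⁿ` of a (homogeneous) polynomial. -/
def zeros {n : ℕ} (f : MvPolynomial (Fin (n + 1)) k) : Set (ProjSp k n) :=
  {x | eval x.rep f = 0}

/-- `D ⊆ ℙⁿ` is an irreducible and reduced divisor (hypersurface): it is the zero
locus of an irreducible homogeneous polynomial of positive degree. -/
def IsIrredDivisor {n : ℕ} (D : Set (ProjSp k n)) : Prop :=
  ∃ (d : ℕ) (f : MvPolynomial (Fin (n + 1)) k),
    0 < d ∧ f.IsHomogeneous d ∧ Irreducible f ∧ D = zeros k f

/-- A hyperplane in `ℙⁿ`: the zero locus of a nonzero linear form. -/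
def IsHyperplane {n : ℕ} (H : Set (ProjSp k n)) : Prop :=
  ∃ f : MvPolynomial (Fin (n + 1)) k, f ≠ 0 ∧ f.IsHomogeneous 1 ∧ H = zeros k f

/-- The line through two points of `ℙⁿ` (the set of points whose representing line
lies in the plane spanned by the two points). -/
def lineThrough {n : ℕ} (p q : ProjSp k n) : Set (ProjSp k n) :=
  {z | z.submodule ≤ p.submodule ⊔ q.submodule}

/-- `S` is a cone with vertex `p`: `p ∈ S` and `S` is a union of lines through `p`.
For an irreducible divisor of degree `d` this is equivalent to `p` being a point of
multiplicity `d` on `S`. -/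
def IsConeWithVertex {n : ℕ} (S : Set (ProjSp k n)) (p : ProjSp k n) : Prop :=
  p ∈ S ∧ ∀ x ∈ S, lineThrough k p x ⊆ S

/-- The cone with vertex `p` over a set `A ⊆ ℙⁿ`: the union of the lines joining `p`
to the points of `A`. -/
def coneOver {n : ℕ} (p : ProjSp k n) (A : Set (ProjSp k n)) : Set (ProjSp k n) :=
  ⋃ a ∈ A, lineThrough k p a

/-- The data of a rational map `ℙⁿ ⇢ ℙᵐ`: an `(m+1)`-tuple of homogeneous polynomials
of a common degree in `n+1` variables. -/
structure RatMap (n m : ℕ) where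
  deg : ℕ
  comp : Fin (m + 1) → MvPolynomial (Fin (n + 1)) k
  homog : ∀ i, (comp i).IsHomogeneous deg

variable {k}

/-- The rational map is defined at `x` if not all of its components vanish at `x`. -/
def RatMap.Defined {n m : ℕ} (F : RatMap k n m) (x : ProjSp k n) : Prop :=
  (fun i => eval x.rep (F.comp i)) ≠ 0

open scoped Classical in
/-- The value of a rational map at a point (junk value where undefined). -/
noncomputable def RatMap.app {n m : ℕ} (F : RatMap k n m) (x : ProjSp k n) :
    ProjSp k m :=
  if h : (fun i => eval x.rep (F.comp i)) ≠ 0 then Projectivization.mk k _ h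
  else Classical.arbitrary _

variable (k)

/-- `F` (with inverse `G`) restricts to a birational map from `A ⊆ ℙⁿ` onto `B ⊆ ℙᵐ`:
there are hypersurface complements, each meeting `A` resp. `B`, on which `F` and `G`
are defined, map `A` into `B` (resp. `B` into `A`) and are mutually inverse.  For
irreducible closed `A`, `B` this says exactly that `F` induces a birational map
`A ⇢ B`, i.e. that the strict transform (proper image) of `A` under `F` is `B`. -/
def IsBirationalOn {n m : ℕ} (F : RatMap k n m) (G : RatMap k m n)
    (A : Set (ProjSp k n)) (B : Set (ProjSp k m)) : Prop :=
  ∃ (u : MvPolynomial (Fin (n + 1)) k) (v : MvPolynomial (Fin (m + 1)) k)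
    (du dv : ℕ), u.IsHomogeneous du ∧ v.IsHomogeneous dv ∧
    ¬ A ⊆ zeros k u ∧ ¬ B ⊆ zeros k v ∧
    (∀ x ∈ A \ zeros k u,
      F.Defined x ∧ F.app x ∈ B ∧ G.Defined (F.app x) ∧ G.app (F.app x) = x) ∧
    (∀ y ∈ B \ zeros k v,
      G.Defined y ∧ G.app y ∈ A ∧ F.Defined (G.app y) ∧ F.app (G.app y) = y)

/-- `A ⊆ ℙⁿ` and `B ⊆ ℙᵐ` are birational (as abstract varieties). -/
def Birational {n m : ℕ} (A : Set (ProjSp k n)) (B : Set (ProjSp k m)) : Prop :=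
  ∃ (F : RatMap k n m) (G : RatMap k m n), IsBirationalOn k F G A B

/-- Two divisors `D, D' ⊆ ℙⁿ` are Cremona equivalent: there is a birational self-map
`Φ` of `ℙⁿ` (a Cremona transformation) whose strict transform of `D` is `D'`,
i.e. `Φ` restricts to a birational map from `D` onto `D'`. -/
def CremonaEquivalent {n : ℕ} (D D' : Set (ProjSp k n)) : Prop :=
  ∃ (F : RatMap k n n) (G : RatMap k n n),
    IsBirationalOn k F G Set.univ Set.univ ∧ IsBirationalOn k F G D D'

/-- `C` is a rational variety: it is birational to some projective space. -/
def IsRationalVariety {n : ℕ} (C : Set (ProjSp k n)) : Prop :=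
  ∃ m : ℕ, Birational k C (Set.univ : Set (ProjSp k m))

end ProjSp

open ProjSp

/-!
In linear coordinates adapted to the vertex, the equation `π` of the cone does not involve one
affine coordinate `t`, and the function field of the base is `k(φ)` with `φ = (φ₁, …, φₘ)`
algebraically independent. Replace `t` by `t π`: the `m + 2` coordinates now have residues
generating `k(φ)`, as they would along a subvariety of codimension two. By the primitive element
theorem, two coordinates whose residues are algebraic over the others can be combined so that one
of the two residues becomes redundant; that coordinate is then free to receive any prescribed
residue in `k(φ)`. Repeating this gives coordinates `(x, A, B)` with residues `(φ, 0, 0)`. Both `A`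
and `B` vanish along the cone, and since `t` is a rational function of `(x, A, B)`, the residue of
`B / A` (or `A / B`) is transcendental over `k(φ)`. The blow-up `(x, A, B) ↦ (x, A, B / A)` thus
restricts to a birational map from the cone onto the hyperplane `A = 0`.
-/

section Evaluation

theorem eval_aeval {R σ τ : Type*} [CommRing R] (x : τ → R) (F : σ → MvPolynomial τ R)
    (p : MvPolynomial σ R) : eval x (aeval F p) = eval (fun i => eval x (F i)) p := by
  simp only [← coe_aeval_eq_eval]
  exact comp_aeval_apply F (aeval x) p

theorem exists_eval_ne_zero {R σ : Type*} [CommRing R] [IsDomain R] [Infinite R]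
    {p : MvPolynomial σ R} (hp : p ≠ 0) : ∃ x : σ → R, eval x p ≠ 0 := by
  by_contra! h
  exact hp (MvPolynomial.funext fun x => by rw [h, map_zero])

theorem dvd_of_forall_eval_eq_zero {k σ : Type*} [Field k] [IsAlgClosed k] [Finite σ]
    {f p : MvPolynomial σ k} (hf : Prime f) (h : ∀ x : σ → k, eval x f = 0 → eval x p = 0) :
    f ∣ p := by
  have : (Ideal.span {f}).IsPrime := (Ideal.span_singleton_prime hf.ne_zero).mpr hf
  rw [← Ideal.mem_span_singleton, ← IsPrime.vanishingIdeal_zeroLocus (K := k) (Ideal.span {f})]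
  exact fun x hx => h x (hx f (Ideal.mem_span_singleton_self f))

end Evaluation

section Homogeneous

variable {R A σ : Type*} [CommRing R]

theorem aeval_const_mul_of_isHomogeneous [CommRing A] [Algebra R A] {p : MvPolynomial σ R} {d : ℕ}
    (hp : p.IsHomogeneous d) (a : A) (x : σ → A) :
    aeval (fun i => a * x i) p = a ^ d * aeval x p := by
  simp only [aeval_def, eval₂_eq, Finset.mul_sum]
  refine Finset.sum_congr rfl fun s hs => ?_
  have hdeg : ∑ i ∈ s.support, s i = d := by
    rw [← hp (mem_support_iff.mp hs), Finsupp.weight_apply, Finsupp.sum]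
    simp
  simp only [mul_pow, Finset.prod_mul_distrib, Finset.prod_pow_eq_pow_sum, hdeg]
  ring

theorem eval_smul_of_isHomogeneous {p : MvPolynomial σ R} {d : ℕ} (hp : p.IsHomogeneous d)
    (a : R) (x : σ → R) : eval (a • x) p = a ^ d * eval x p :=
  aeval_const_mul_of_isHomogeneous hp a x

/-- The dehomogenization of a polynomial on the chart where the zeroth coordinate is `1`. -/
noncomputable def dehomogenize (R : Type*) [CommRing R] (n : ℕ) :
    MvPolynomial (Fin (n + 1)) R →ₐ[R] MvPolynomial (Fin n) R :=
  aeval (Fin.cons 1 X)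

variable {n d e : ℕ}

theorem aeval_dehomogenize [CommRing A] [Algebra R A] (x : Fin n → A)
    (p : MvPolynomial (Fin (n + 1)) R) :
    aeval x (dehomogenize R n p) = aeval (Fin.cons 1 x) p := by
  rw [dehomogenize, comp_aeval_apply]
  congr 2
  ext i
  cases i using Fin.cases <;> simp

@[simp]
theorem dehomogenize_X_zero : dehomogenize R n (X 0) = 1 := by
  simp [dehomogenize]

@[simp]
theorem dehomogenize_X_succ (i : Fin n) : dehomogenize R n (X i.succ) = X i := by
  simp [dehomogenize]

theorem eq_zero_of_dehomogenize_eq_zero [IsDomain R] {p : MvPolynomial (Fin (n + 1)) R}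
    (hp : p.IsHomogeneous d) (h : dehomogenize R n p = 0) : p = 0 := by
  let K := FractionRing (MvPolynomial (Fin (n + 1)) R)
  let ι := Algebra.algHom R (MvPolynomial (Fin (n + 1)) R) K
  have hι : Function.Injective ι := FaithfulSMul.algebraMap_injective _ K
  have hX : ι (X 0) ≠ 0 := (map_ne_zero_iff ι hι).mpr (X_ne_zero 0)
  have hcoord : (fun i => ι (X i)) =
      fun i => ι (X 0) *
        (Fin.cons 1 fun j => ι (X (Fin.succ j)) / ι (X 0) : Fin (n + 1) → K) i := by
    ext i
    cases i using Fin.cases <;> simp [mul_div_cancel₀ _ hX]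
  apply (map_eq_zero_iff ι hι).mp
  rw [← aeval_X_left_apply p, comp_aeval_apply, hcoord, aeval_const_mul_of_isHomogeneous hp,
    ← aeval_dehomogenize, h, map_zero, mul_zero]

theorem dehomogenize_inj [IsDomain R] {p q : MvPolynomial (Fin (n + 1)) R}
    (hp : p.IsHomogeneous d) (hq : q.IsHomogeneous d)
    (h : dehomogenize R n p = dehomogenize R n q) : p = q :=
  sub_eq_zero.mp (eq_zero_of_dehomogenize_eq_zero (hp.sub hq) (by rw [map_sub, h, sub_self]))

theorem exists_isHomogeneous_dehomogenize_eq (p : MvPolynomial (Fin n) R) (hd : p.totalDegree ≤ d) :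
    ∃ q : MvPolynomial (Fin (n + 1)) R, q.IsHomogeneous d ∧ dehomogenize R n q = p := by
  refine ⟨∑ i ∈ Finset.range (d + 1), X 0 ^ (d - i) * rename Fin.succ (homogeneousComponent i p),
    IsHomogeneous.sum _ _ _ fun i hi => ?_, ?_⟩
  · have h := ((isHomogeneous_X R (0 : Fin (n + 1))).pow (d - i)).mul
      ((homogeneousComponent_isHomogeneous i p).rename_isHomogeneous (f := Fin.succ))
    rwa [one_mul, Nat.sub_add_cancel (Finset.mem_range_succ_iff.mp hi)] at h
  · have h (q : MvPolynomial (Fin n) R) : dehomogenize R n (rename Fin.succ q) = q := by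
      rw [dehomogenize, aeval_rename]
      exact aeval_X_left_apply q
    simp only [map_sum, map_mul, map_pow, dehomogenize_X_zero, h, one_pow, one_mul]
    rw [← Finset.sum_subset (Finset.range_subset_range.mpr (Nat.succ_le_succ hd)),
      sum_homogeneousComponent]
    intro i _ hi
    exact homogeneousComponent_eq_zero _ _ (by simpa using hi)

theorem exists_isHomogeneous_dehomogenize_eq_family {ι : Type*} [Finite ι]
    (p : ι → MvPolynomial (Fin n) R) :
    ∃ (d : ℕ) (q : ι → MvPolynomial (Fin (n + 1)) R),
      (∀ i, (q i).IsHomogeneous d) ∧ ∀ i, dehomogenize R n (q i) = p i := by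
  cases nonempty_fintype ι
  choose q hq hqp using fun i => exists_isHomogeneous_dehomogenize_eq (p i)
    (Finset.le_sup (f := fun i => (p i).totalDegree) (Finset.mem_univ i))
  exact ⟨_, q, hq, hqp⟩

theorem dvd_of_dehomogenize_dvd [IsDomain R] {f p : MvPolynomial (Fin (n + 1)) R} (hf : Prime f)
    (hfd : f.IsHomogeneous d) (hfX : ¬ f ∣ X 0) (hp : p.IsHomogeneous e)
    (h : dehomogenize R n f ∣ dehomogenize R n p) : f ∣ p := by
  obtain ⟨g, hg⟩ := h
  obtain ⟨q, hq, hqg⟩ :=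
    exists_isHomogeneous_dehomogenize_eq g (Nat.le_add_left g.totalDegree e)
  have hX : (X 0 ^ (d + g.totalDegree) * p).IsHomogeneous (d + (e + g.totalDegree)) := by
    convert ((isHomogeneous_X R (0 : Fin (n + 1))).pow _).mul hp using 1
    ring
  have heq : X 0 ^ (d + g.totalDegree) * p = f * q :=
    dehomogenize_inj hX (hfd.mul hq) (by simp [hg, hqg])
  exact (hf.dvd_or_dvd (heq ▸ dvd_mul_right f q)).resolve_left fun h => hfX (hf.dvd_of_dvd_pow h)

theorem prime_dehomogenize [IsDomain R] {f : MvPolynomial (Fin (n + 1)) R} (hf : Prime f)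
    (hfd : f.IsHomogeneous d) (hfX : ¬ f ∣ X 0) : Prime (dehomogenize R n f) := by
  refine ⟨fun h => hf.ne_zero (eq_zero_of_dehomogenize_eq_zero hfd h), fun h => hf.not_isUnit ?_,
    fun a b hab => ?_⟩
  · exact isUnit_of_dvd_one (dvd_of_dehomogenize_dvd hf hfd hfX (isHomogeneous_one _ _) h.dvd)
  · obtain ⟨p, hp, rfl⟩ := exists_isHomogeneous_dehomogenize_eq a le_rfl
    obtain ⟨q, hq, rfl⟩ := exists_isHomogeneous_dehomogenize_eq b le_rfl
    rw [← map_mul] at hab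
    exact (hf.dvd_or_dvd (dvd_of_dehomogenize_dvd hf hfd hfX (hp.mul hq) hab)).imp
      (map_dvd _) (map_dvd _)

end Homogeneous

namespace ProjSp

variable {k : Type} [Field k] {n m d e : ℕ}

theorem mk_mem_zeros {f : MvPolynomial (Fin (n + 1)) k} (hf : f.IsHomogeneous d)
    {x : Fin (n + 1) → k} (hx : x ≠ 0) :
    Projectivization.mk k x hx ∈ zeros k f ↔ eval x f = 0 := by
  obtain ⟨a, ha⟩ := Projectivization.exists_smul_eq_mk_rep k x hx
  change eval (Projectivization.mk k x hx).rep f = 0 ↔ _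
  rw [← ha, Units.smul_def, eval_smul_of_isHomogeneous hf]
  simp

theorem RatMap.app_eq_mk (F : RatMap k n m) {x : ProjSp k n}
    (h : (fun i => eval x.rep (F.comp i)) ≠ 0) : F.app x = Projectivization.mk k _ h :=
  dif_pos h

theorem RatMap.eval_rep_mk (F : RatMap k n m) {x : Fin (n + 1) → k} (hx : x ≠ 0) :
    ∃ a : k, a ≠ 0 ∧ (fun i => eval (Projectivization.mk k x hx).rep (F.comp i)) =
      a • fun i => eval x (F.comp i) := by
  obtain ⟨a, ha⟩ := Projectivization.exists_smul_eq_mk_rep k x hx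
  refine ⟨(a : k) ^ F.deg, pow_ne_zero _ a.ne_zero, ?_⟩
  ext i
  rw [← ha, Units.smul_def, eval_smul_of_isHomogeneous (F.homog i), Pi.smul_apply, smul_eq_mul]

theorem RatMap.defined_mk_iff (F : RatMap k n m) {x : Fin (n + 1) → k} (hx : x ≠ 0) :
    F.Defined (Projectivization.mk k x hx) ↔ (fun i => eval x (F.comp i)) ≠ 0 := by
  obtain ⟨a, ha, h⟩ := F.eval_rep_mk hx
  rw [RatMap.Defined, h, Ne, smul_eq_zero_iff_right ha]

theorem RatMap.app_mk (F : RatMap k n m) {x : Fin (n + 1) → k} (hx : x ≠ 0)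
    (h : (fun i => eval x (F.comp i)) ≠ 0) :
    F.app (Projectivization.mk k x hx) = Projectivization.mk k _ h := by
  obtain ⟨a, -, ha⟩ := F.eval_rep_mk hx
  have hdef : (fun i => eval (Projectivization.mk k x hx).rep (F.comp i)) ≠ 0 :=
    (F.defined_mk_iff hx).mpr h
  rw [F.app_eq_mk hdef, Projectivization.mk_eq_mk_iff']
  exact ⟨a, ha.symm⟩

theorem RatMap.app_mem_zeros (F : RatMap k n m) {f : MvPolynomial (Fin (n + 1)) k}
    {g : MvPolynomial (Fin (m + 1)) k} (hg : g.IsHomogeneous d) (hfg : f ∣ aeval F.comp g)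
    {x : ProjSp k n} (hx : x ∈ zeros k f) (hF : F.Defined x) : F.app x ∈ zeros k g := by
  have hdef : (fun i => eval x.rep (F.comp i)) ≠ 0 := hF
  rw [F.app_eq_mk hdef, mk_mem_zeros hg, ← eval_aeval]
  exact zero_dvd_iff.mp (hx ▸ map_dvd (eval x.rep) hfg)

theorem RatMap.app_app_eq_of_mul_eq (F : RatMap k n m) (G : RatMap k m n)
    {α β : MvPolynomial (Fin (n + 1)) k}
    (hGF : ∀ i, α * aeval F.comp (G.comp i) = β * X i)
    {x : ProjSp k n} (hβ : x ∉ zeros k β) {j : Fin (m + 1)} (hF : x ∉ zeros k (F.comp j)) :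
    F.Defined x ∧ G.Defined (F.app x) ∧ G.app (F.app x) = x := by
  have hdef : F.Defined x := fun h => hF (congrFun h j)
  have hcoord : (eval x.rep α) • (fun i => eval (fun j => eval x.rep (F.comp j)) (G.comp i)) =
      (eval x.rep β) • x.rep := by
    ext i
    simpa only [Pi.smul_apply, smul_eq_mul, map_mul, eval_aeval, eval_X] using
      congrArg (eval x.rep) (hGF i)
  have hα : eval x.rep α ≠ 0 := by
    intro h
    rw [h, zero_smul] at hcoord
    exact smul_ne_zero hβ x.rep_nonzero hcoord.symm
  have hG : (fun i => eval (fun j => eval x.rep (F.comp j)) (G.comp i)) ≠ 0 := by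
    intro h
    rw [h, smul_zero] at hcoord
    exact smul_ne_zero hβ x.rep_nonzero hcoord.symm
  have happ : F.app x = Projectivization.mk k _ hdef := F.app_eq_mk hdef
  refine ⟨hdef, happ ▸ (G.defined_mk_iff hdef).mpr hG, ?_⟩
  rw [happ, G.app_mk hdef hG]
  conv_rhs => rw [← x.mk_rep]
  rw [Projectivization.mk_eq_mk_iff']
  refine ⟨(eval x.rep α)⁻¹ * eval x.rep β, ?_⟩
  rw [mul_smul, ← hcoord, smul_smul, inv_mul_cancel₀ hα, one_smul]

theorem isBirationalOn_of_mul_eq {F : RatMap k n m} {G : RatMap k m n}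
    {α β : MvPolynomial (Fin (n + 1)) k} {γ δ : MvPolynomial (Fin (m + 1)) k}
    (hβ : β.IsHomogeneous d) (hδ : δ.IsHomogeneous e)
    (hGF : ∀ i, α * aeval F.comp (G.comp i) = β * X i)
    (hFG : ∀ i, γ * aeval G.comp (F.comp i) = δ * X i)
    {A : Set (ProjSp k n)} {B : Set (ProjSp k m)}
    (hAB : ∀ x ∈ A, F.Defined x → F.app x ∈ B) (hBA : ∀ y ∈ B, G.Defined y → G.app y ∈ A)
    {i : Fin (m + 1)} (hA : ¬ A ⊆ zeros k (β * F.comp i))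
    {j : Fin (n + 1)} (hB : ¬ B ⊆ zeros k (δ * G.comp j)) : IsBirationalOn k F G A B := by
  have hmul {l : ℕ} {p q : MvPolynomial (Fin (l + 1)) k} {x : ProjSp k l}
      (h : x ∉ zeros k (p * q)) : x ∉ zeros k p ∧ x ∉ zeros k q := by
    simpa [zeros] using h
  refine ⟨_, _, _, _, hβ.mul (F.homog i), hδ.mul (G.homog j), hA, hB, fun x hx => ?_,
    fun y hy => ?_⟩
  · obtain ⟨hF, hG, h⟩ := F.app_app_eq_of_mul_eq G hGF (hmul hx.2).1 (hmul hx.2).2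
    exact ⟨hF, hAB x hx.1 hF, hG, h⟩
  · obtain ⟨hG, hF, h⟩ := G.app_app_eq_of_mul_eq F hFG (hmul hy.2).1 (hmul hy.2).2
    exact ⟨hG, hBA y hy.1 hG, hF, h⟩

end ProjSp

section CremonaCriterion

variable {k : Type} [Field k] {n d e : ℕ} {f g : MvPolynomial (Fin (n + 1)) k}

theorem dvd_of_zeros_subset [IsAlgClosed k] (hf : Prime f) (hfd : f.IsHomogeneous d)
    (hne : (zeros k f).Nonempty) {p : MvPolynomial (Fin (n + 1)) k} (hp : p.IsHomogeneous e)
    (h : zeros k f ⊆ zeros k p) : f ∣ p := by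
  refine dvd_of_forall_eval_eq_zero hf fun x hx => ?_
  obtain ⟨y, hy⟩ := hne
  rcases eq_or_ne x 0 with rfl | hx0
  · simpa using eval_smul_of_isHomogeneous hp 0 y.rep |>.trans (by
      rw [show eval y.rep p = 0 from h hy, mul_zero])
  · exact (mk_mem_zeros hp hx0).mp (h ((mk_mem_zeros hfd hx0).mpr hx))

/-- A pair of rational self-maps of `ℙⁿ`, mutually inverse up to the common factors `num` and
`den`, such that `F` is dominant and takes the generic point of `V(f)` to that of `V(g)`. -/
structure CremonaData (f g : MvPolynomial (Fin (n + 1)) k) where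
  F : RatMap k n n
  G : RatMap k n n
  num : MvPolynomial (Fin (n + 1)) k
  den : MvPolynomial (Fin (n + 1)) k
  degNum : ℕ
  isHomogeneous_num : num.IsHomogeneous degNum
  not_dvd_num : ¬ f ∣ num
  not_dvd_den : ¬ f ∣ den
  den_mul_eq : ∀ i, den * aeval F.comp (G.comp i) = num * X i
  eq_zero_of_aeval_eq_zero : ∀ {e : ℕ} {p : MvPolynomial (Fin (n + 1)) k}, p.IsHomogeneous e →
    aeval F.comp p = 0 → p = 0
  dvd_aeval_iff : ∀ {e : ℕ} {p : MvPolynomial (Fin (n + 1)) k}, p.IsHomogeneous e →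
    (f ∣ aeval F.comp p ↔ g ∣ p)

namespace CremonaData

theorem den_pow_mul_aeval_aeval (Φ : CremonaData f g) {p : MvPolynomial (Fin (n + 1)) k}
    (hp : p.IsHomogeneous e) :
    Φ.den ^ e * aeval Φ.F.comp (aeval Φ.G.comp p) = Φ.num ^ e * p := by
  rw [comp_aeval_apply, ← aeval_const_mul_of_isHomogeneous hp, funext Φ.den_mul_eq,
    aeval_const_mul_of_isHomogeneous hp, aeval_X_left_apply]

theorem dvd_iff_dvd_aeval (Φ : CremonaData f g) (hf : Prime f)
    {p : MvPolynomial (Fin (n + 1)) k} (hp : p.IsHomogeneous e) :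
    f ∣ p ↔ g ∣ aeval Φ.G.comp p := by
  have hcancel {a q : MvPolynomial (Fin (n + 1)) k} (ha : ¬ f ∣ a) : f ∣ a ^ e * q ↔ f ∣ q :=
    hf.dvd_mul.trans (or_iff_right (mt hf.dvd_of_dvd_pow ha))
  rw [← Φ.dvd_aeval_iff (hp.aeval _ Φ.G.homog), ← hcancel (q := aeval _ _) Φ.not_dvd_den,
    Φ.den_pow_mul_aeval_aeval hp, hcancel Φ.not_dvd_num]

theorem X_mul_aeval_comp (Φ : CremonaData f g) (i j : Fin (n + 1)) :
    X j * aeval Φ.G.comp (Φ.F.comp i) = aeval Φ.G.comp (Φ.F.comp j) * X i := by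
  have hden : Φ.den ≠ 0 := fun h => Φ.not_dvd_den (h ▸ dvd_zero f)
  have hhom (i : Fin (n + 1)) := (Φ.F.homog i).aeval _ Φ.G.homog
  rw [← sub_eq_zero]
  refine Φ.eq_zero_of_aeval_eq_zero
    (((isHomogeneous_X k j).mul (hhom i)).sub ?_) ?_
  · rw [mul_comm]
    exact (isHomogeneous_X k i).mul (hhom j)
  · refine (mul_eq_zero.mp ?_).resolve_left (pow_ne_zero Φ.F.deg hden)
    simp only [map_sub, map_mul, aeval_X]
    linear_combination Φ.F.comp j * Φ.den_pow_mul_aeval_aeval (Φ.F.homog i) -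
      Φ.F.comp i * Φ.den_pow_mul_aeval_aeval (Φ.F.homog j)

theorem cremonaEquivalent [IsAlgClosed k] (Φ : CremonaData f g) (hf : Prime f) (hg : Prime g)
    (hfd : f.IsHomogeneous d) (hge : g.IsHomogeneous e) (hfne : (zeros k f).Nonempty)
    (hgne : (zeros k g).Nonempty) : CremonaEquivalent k (zeros k f) (zeros k g) := by
  have hX {p : MvPolynomial (Fin (n + 1)) k} (h : (zeros k p).Nonempty) : ∃ i, ¬ p ∣ X i := by
    obtain ⟨x, hx⟩ := h
    obtain ⟨i, hi⟩ := Function.ne_iff.mp x.rep_nonzero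
    refine ⟨i, fun hp => hi ?_⟩
    have h0 : eval x.rep p = 0 := hx
    simpa [h0] using map_dvd (eval x.rep) hp
  obtain ⟨i, hi⟩ := hX hgne
  obtain ⟨j, hj⟩ := hX hfne
  have hFi : ¬ f ∣ Φ.F.comp i := by simpa using mt (Φ.dvd_aeval_iff (isHomogeneous_X k i)).mp hi
  have hGj : ¬ g ∣ Φ.G.comp j := by
    simpa using mt (Φ.dvd_iff_dvd_aeval hf (isHomogeneous_X k j)).mpr hj
  have hδ := mt (Φ.dvd_iff_dvd_aeval hf (Φ.F.homog i)).mpr hFi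
  have hδd := (Φ.F.homog i).aeval _ Φ.G.homog
  have hF : ¬ zeros k f ⊆ zeros k (Φ.num * Φ.F.comp i) := fun h =>
    hf.not_dvd_mul Φ.not_dvd_num hFi
      (dvd_of_zeros_subset hf hfd hfne (Φ.isHomogeneous_num.mul (Φ.F.homog i)) h)
  have hG : ¬ zeros k g ⊆ zeros k (aeval Φ.G.comp (Φ.F.comp i) * Φ.G.comp j) := fun h =>
    hg.not_dvd_mul hδ hGj (dvd_of_zeros_subset hg hge hgne (hδd.mul (Φ.G.homog j)) h)
  have hFG := fun l => Φ.X_mul_aeval_comp l i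
  refine ⟨Φ.F, Φ.G, isBirationalOn_of_mul_eq Φ.isHomogeneous_num hδd Φ.den_mul_eq hFG
    (fun _ _ _ => trivial) (fun _ _ _ => trivial) (mt (Set.subset_univ _).trans hF)
    (mt (Set.subset_univ _).trans hG), isBirationalOn_of_mul_eq Φ.isHomogeneous_num hδd
    Φ.den_mul_eq hFG (fun x => Φ.F.app_mem_zeros hge ((Φ.dvd_aeval_iff hge).mpr dvd_rfl))
    (fun y => Φ.G.app_mem_zeros hfd ((Φ.dvd_iff_dvd_aeval hf hfd).mp dvd_rfl)) hF hG⟩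

end CremonaData

end CremonaCriterion

section LocalAdjoin

variable {k E : Type*} [Field k] [CommRing E] [Algebra k E]

/-- The fractions `a / b` with `a, b ∈ k[s]` and `b` a unit of the ambient ring `E`: the smallest
subalgebra of `E` that contains `s` and the inverses of those of its elements that are units
of `E`. -/
def localAdjoin (k : Type*) {E : Type*} [Field k] [CommRing E] [Algebra k E] (s : Set E) :
    Subalgebra k E where
  carrier := {z | ∃ a ∈ Algebra.adjoin k s, ∃ b ∈ Algebra.adjoin k s, IsUnit b ∧ z * b = a}
  mul_mem' := by
    rintro z w ⟨a, ha, b, hb, hub, hab⟩ ⟨c, hc, d, hd, hud, hcd⟩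
    exact ⟨_, mul_mem ha hc, _, mul_mem hb hd, hub.mul hud, by rw [← hab, ← hcd, mul_mul_mul_comm]⟩
  add_mem' := by
    rintro z w ⟨a, ha, b, hb, hub, hab⟩ ⟨c, hc, d, hd, hud, hcd⟩
    refine ⟨_, add_mem (mul_mem ha hd) (mul_mem hc hb), _, mul_mem hb hd, hub.mul hud, ?_⟩
    rw [← hab, ← hcd]
    ring
  algebraMap_mem' c := ⟨_, Subalgebra.algebraMap_mem _ c, 1, one_mem _, isUnit_one, mul_one _⟩

variable {s t : Set E} {a b z : E}

theorem adjoin_le_localAdjoin : Algebra.adjoin k s ≤ localAdjoin k s :=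
  fun z hz => ⟨z, hz, 1, one_mem _, isUnit_one, mul_one z⟩

theorem subset_localAdjoin : s ⊆ localAdjoin k s :=
  Algebra.subset_adjoin.trans adjoin_le_localAdjoin

theorem mem_localAdjoin_of_mul_eq (ha : a ∈ localAdjoin k s) (hb : b ∈ localAdjoin k s)
    (hu : IsUnit b) (h : z * b = a) : z ∈ localAdjoin k s := by
  obtain ⟨a₁, ha₁, a₂, ha₂, hua, haa⟩ := ha
  obtain ⟨b₁, hb₁, b₂, hb₂, hub, rfl⟩ := hb
  refine ⟨_, mul_mem ha₁ hb₂, _, mul_mem hb₁ ha₂, (hu.mul hub).mul hua, ?_⟩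
  rw [← haa, ← h]
  ring

theorem localAdjoin_le_iff : localAdjoin k s ≤ localAdjoin k t ↔ s ⊆ localAdjoin k t := by
  refine ⟨subset_localAdjoin.trans, fun h z ⟨a, ha, b, hb, hu, hz⟩ => ?_⟩
  have hle : Algebra.adjoin k s ≤ localAdjoin k t := Algebra.adjoin_le h
  exact mem_localAdjoin_of_mul_eq (hle ha) (hle hb) hu hz

theorem localAdjoin_mono (h : s ⊆ t) : localAdjoin k s ≤ localAdjoin k t :=
  localAdjoin_le_iff.mpr (h.trans subset_localAdjoin)

theorem localAdjoin_union_pair_sub_le {x y : E} (hx : x ∈ localAdjoin k s)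
    (hy : y ∈ localAdjoin k s) :
    localAdjoin k (s ∪ {a - x, b - y}) ≤ localAdjoin k (s ∪ {a, b}) := by
  have hs : localAdjoin k s ≤ localAdjoin k (s ∪ {a, b}) := localAdjoin_mono Set.subset_union_left
  rw [localAdjoin_le_iff]
  rintro _ (hz | rfl | rfl)
  · exact hs (subset_localAdjoin hz)
  · exact sub_mem (subset_localAdjoin (by simp)) (hs hx)
  · exact sub_mem (subset_localAdjoin (by simp)) (hs hy)

theorem localAdjoin_union_pair_sub {x y : E} (hx : x ∈ localAdjoin k s)
    (hy : y ∈ localAdjoin k s) :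
    localAdjoin k (s ∪ {a - x, b - y}) = localAdjoin k (s ∪ {a, b}) :=
  (localAdjoin_union_pair_sub_le hx hy).antisymm <| by
    simpa using localAdjoin_union_pair_sub_le (a := a - x) (b := b - y) (neg_mem hx) (neg_mem hy)

theorem localAdjoin_union_pair_mul_le {c : E} :
    localAdjoin k (s ∪ {a, a * c}) ≤ localAdjoin k (s ∪ {a, c}) := by
  rw [localAdjoin_le_iff]
  rintro _ (hz | rfl | rfl)
  · exact subset_localAdjoin (Or.inl hz)
  · exact subset_localAdjoin (by simp)
  · exact mul_mem (subset_localAdjoin (by simp)) (subset_localAdjoin (by simp))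

theorem localAdjoin_range_update {ι : Type*} [DecidableEq ι] (v : ι → E) (i : ι) {x : E}
    (hx : x ∈ localAdjoin k (v '' {i}ᶜ)) :
    localAdjoin k (Set.range (Function.update v i (v i + x))) = localAdjoin k (Set.range v) := by
  have hle {v : ι → E} : localAdjoin k (v '' {i}ᶜ) ≤ localAdjoin k (Set.range v) :=
    localAdjoin_mono (Set.image_subset_range v _)
  have himage : Function.update v i (v i + x) '' {i}ᶜ = v '' {i}ᶜ :=
    Set.image_congr fun j hj => Function.update_of_ne hj _ _
  refine le_antisymm (localAdjoin_le_iff.mpr ?_) (localAdjoin_le_iff.mpr ?_)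
  · rintro _ ⟨j, rfl⟩
    rcases eq_or_ne j i with rfl | hj
    · rw [Function.update_self]
      exact add_mem (subset_localAdjoin ⟨j, rfl⟩) (hle hx)
    · rw [Function.update_of_ne hj]
      exact subset_localAdjoin ⟨j, rfl⟩
  · rintro _ ⟨j, rfl⟩
    rcases eq_or_ne j i with rfl | hj
    · have hsum : v j + x ∈ localAdjoin k (Set.range (Function.update v j (v j + x))) :=
        subset_localAdjoin ⟨j, Function.update_self ..⟩
      have hsub := sub_mem hsum (hle (himage.symm ▸ hx))
      rwa [add_sub_cancel_right] at hsub
    · exact subset_localAdjoin ⟨j, Function.update_of_ne hj _ _⟩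

theorem mem_localAdjoin_range_iff {ι : Type*} {v : ι → E} : z ∈ localAdjoin k (Set.range v) ↔
    ∃ P Q : MvPolynomial ι k, IsUnit (aeval v Q) ∧ z * aeval v Q = aeval v P := by
  simp only [localAdjoin, Algebra.adjoin_range_eq_range_aeval]
  constructor
  · rintro ⟨_, ⟨P, rfl⟩, _, ⟨Q, rfl⟩, hQ, hz⟩
    exact ⟨P, Q, hQ, hz⟩
  · rintro ⟨P, Q, hQ, hz⟩
    exact ⟨_, ⟨P, rfl⟩, _, ⟨Q, rfl⟩, hQ, hz⟩

section Residue

variable {κ : Type*} [Field κ] [Algebra k κ] (res : E →ₐ[k] κ)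

theorem residue_mem_adjoin (hz : z ∈ localAdjoin k s) :
    res z ∈ IntermediateField.adjoin k (res '' s) := by
  obtain ⟨a, ha, b, hb, hu, rfl⟩ := hz
  have hle : (Algebra.adjoin k s).map res ≤
      (IntermediateField.adjoin k (res '' s)).toSubalgebra := by
    rw [AlgHom.map_adjoin]
    exact IntermediateField.algebra_adjoin_le_adjoin k _
  rw [← mul_div_cancel_right₀ (res z) (hu.map res).ne_zero, ← map_mul]
  exact div_mem (hle ⟨_, ha, rfl⟩) (hle ⟨b, hb, rfl⟩)

theorem exists_mem_localAdjoin_residue_eq [IsLocalHom res] {c : κ}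
    (hc : c ∈ IntermediateField.adjoin k (res '' s)) : ∃ z ∈ localAdjoin k s, res z = c := by
  obtain ⟨r, hr, q, hq, rfl⟩ := IntermediateField.mem_adjoin_iff_div.mp hc
  rw [← AlgHom.map_adjoin] at hr hq
  obtain ⟨a, ha, rfl⟩ := hr
  obtain ⟨b, hb, rfl⟩ := hq
  by_cases h : res b = 0
  · exact ⟨0, zero_mem _, by simp [h]⟩
  · obtain ⟨u, rfl⟩ := isUnit_of_map_unit res b (isUnit_iff_ne_zero.mpr h)
    exact ⟨a * u⁻¹, ⟨a, ha, u, hb, u.isUnit, by simp⟩, by simp [div_eq_mul_inv]⟩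

theorem adjoin_residue_eq_of_localAdjoin_eq (h : localAdjoin k s = localAdjoin k t) :
    IntermediateField.adjoin k (res '' s) = IntermediateField.adjoin k (res '' t) := by
  refine le_antisymm ?_ ?_ <;> rw [IntermediateField.adjoin_le_iff] <;> rintro _ ⟨z, hz, rfl⟩
  · exact residue_mem_adjoin res (h ▸ subset_localAdjoin hz)
  · exact residue_mem_adjoin res (h ▸ subset_localAdjoin hz)

theorem eq_zero_of_mem_localAdjoin_range {ι : Type*} {x : ι → E}
    (hx : AlgebraicIndependent k (res ∘ x)) (hz : z ∈ localAdjoin k (Set.range x))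
    (h : res z = 0) : z = 0 := by
  obtain ⟨P, Q, hQ, hz⟩ := mem_localAdjoin_range_iff.mp hz
  have hP : aeval (res ∘ x) P = 0 := by
    change aeval (fun i => res (x i)) P = 0
    rw [← comp_aeval_apply, ← hz, map_mul, h, zero_mul]
  rw [hx.eq_zero_of_aeval_eq_zero P hP, map_zero] at hz
  exact hQ.mul_left_eq_zero.mp hz

variable {V : Subalgebra k E}

theorem residue_eq_zero_of_mem_span (ht : ∀ y ∈ t, res y = 0) (hz : z ∈ Submodule.span V t) :
    res z = 0 := by
  induction hz using Submodule.span_induction with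
  | mem x hx => exact ht x hx
  | zero => exact map_zero res
  | add x w _ _ hx hw => rw [map_add, hx, hw, add_zero]
  | smul c x _ hx => rw [Algebra.smul_def, map_mul, hx, mul_zero]

theorem mul_mem_span (ha : a ∈ V) (hz : z ∈ Submodule.span V t) : a * z ∈ Submodule.span V t :=
  Submodule.smul_mem _ (⟨a, ha⟩ : V) hz

theorem exists_sub_mem_span_of_mem_adjoin (hV : Algebra.adjoin k (s ∪ t) ≤ V)
    (hz : z ∈ Algebra.adjoin k (s ∪ t)) :
    ∃ y ∈ Algebra.adjoin k s, z - y ∈ Submodule.span V t := by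
  have hsV : Algebra.adjoin k s ≤ V := (Algebra.adjoin_mono Set.subset_union_left).trans hV
  induction hz using Algebra.adjoin_induction with
  | mem w hw =>
    rcases hw with hw | hw
    · exact ⟨w, Algebra.subset_adjoin hw, by simp⟩
    · exact ⟨0, zero_mem _, by simpa using Submodule.subset_span hw⟩
  | algebraMap c => exact ⟨_, Subalgebra.algebraMap_mem _ c, by simp⟩
  | add x w _ _ hx hw =>
    obtain ⟨x', hx', hx⟩ := hx
    obtain ⟨w', hw', hw⟩ := hw
    exact ⟨_, add_mem hx' hw', by simpa only [add_sub_add_comm] using add_mem hx hw⟩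
  | mul x w hxV _ hx hw =>
    obtain ⟨x', hx', hx⟩ := hx
    obtain ⟨w', hw', hw⟩ := hw
    refine ⟨_, mul_mem hx' hw', ?_⟩
    rw [show x * w - x' * w' = x * (w - w') + w' * (x - x') by ring]
    exact add_mem (mul_mem_span (hV hxV) hw) (mul_mem_span (hsV hw') hx)

theorem exists_sub_mem_span_of_mem_localAdjoin [IsLocalHom res] (ht : ∀ y ∈ t, res y = 0)
    (hz : z ∈ localAdjoin k (s ∪ t)) :
    ∃ y ∈ localAdjoin k s, z - y ∈ Submodule.span (localAdjoin k (s ∪ t)) t := by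
  have hsV : localAdjoin k s ≤ localAdjoin k (s ∪ t) := localAdjoin_mono Set.subset_union_left
  have hzV := hz
  obtain ⟨a, ha, b, hb, hu, hz⟩ := hz
  obtain ⟨a', ha', ha⟩ := exists_sub_mem_span_of_mem_adjoin adjoin_le_localAdjoin ha
  obtain ⟨b', hb', hb⟩ := exists_sub_mem_span_of_mem_adjoin adjoin_le_localAdjoin hb
  have hres : res b = res b' := by
    rw [← sub_eq_zero, ← map_sub, residue_eq_zero_of_mem_span res ht hb]
  obtain ⟨u, rfl⟩ := isUnit_of_map_unit res b' (hres ▸ hu.map res)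
  have huV : (↑u⁻¹ : E) ∈ localAdjoin k s :=
    mem_localAdjoin_of_mul_eq (one_mem _) (adjoin_le_localAdjoin hb') u.isUnit u.inv_mul
  refine ⟨_, mul_mem huV (adjoin_le_localAdjoin ha'), ?_⟩
  have heq : z - ↑u⁻¹ * a' = ↑u⁻¹ * (a - a' - z * (b - u)) := by
    rw [← hz]
    linear_combination -z * u.inv_mul
  rw [heq]
  exact mul_mem_span (hsV huV) (sub_mem ha (mul_mem_span hzV hb))

end Residue

end LocalAdjoin

section Exchange

open IntermediateField

theorem exists_adjoin_simple_add_smul_eq_adjoin_pair (k : Type*) {F K : Type*} [Field k]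
    [CharZero k] [Field F] [Field K] [Algebra k F] [Algebra F K] [Algebra k K]
    [IsScalarTower k F K] {x y : K} (hx : IsAlgebraic F x) (hy : IsAlgebraic F y) :
    ∃ c : k, F⟮x + c • y⟯ = F⟮x, y⟯ := by
  have : CharZero F := charZero_of_injective_algebraMap (algebraMap k F).injective
  have : FiniteDimensional F F⟮x, y⟯ := finiteDimensional_adjoin_pair hx.isIntegral hy.isIntegral
  have : Finite (IntermediateField F F⟮x, y⟯) :=
    (Field.exists_primitive_element_iff_finite_intermediateField F _).mp
      ⟨inferInstance, Field.exists_primitive_element F _⟩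
  let x' : F⟮x, y⟯ := ⟨x, subset_adjoin F _ (by simp)⟩
  let y' : F⟮x, y⟯ := ⟨y, subset_adjoin F _ (by simp)⟩
  obtain ⟨c, c', hne, hcc⟩ := Finite.exists_ne_map_eq_of_infinite fun c : k => F⟮x' + c • y'⟯
  have hlift (a : k) : lift F⟮x' + a • y'⟯ = F⟮x + a • y⟯ := lift_adjoin_simple F _ _
  have hcc : F⟮x + c • y⟯ = F⟮x + c' • y⟯ := by rw [← hlift, ← hlift, hcc]
  have hc := mem_adjoin_simple_self F (x + c • y)
  have hc' : x + c' • y ∈ F⟮x + c • y⟯ := hcc ▸ mem_adjoin_simple_self F (x + c' • y)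
  have hsmul (a : k) {z : K} (hz : z ∈ F⟮x + c • y⟯) : a • z ∈ F⟮x + c • y⟯ := by
    rw [← algebraMap_smul F a z]
    exact IntermediateField.smul_mem _ hz
  have hy : y ∈ F⟮x + c • y⟯ := by
    have h := hsmul (c - c')⁻¹ (sub_mem hc hc')
    rwa [add_sub_add_left_eq_sub, ← sub_smul, smul_smul, inv_mul_cancel₀ (sub_ne_zero.mpr hne),
      one_smul] at h
  have hx : x ∈ F⟮x + c • y⟯ := by simpa using sub_mem hc (hsmul c hy)
  refine ⟨c, le_antisymm (adjoin_simple_le_iff.mpr (x' + c • y').2) ?_⟩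
  rw [adjoin_le_iff]
  rintro z (rfl | rfl)
  · exact hx
  · exact hy

variable {k κ : Type*} [Field k] [Field κ] [Algebra k κ]

theorem isAlgebraic_of_mem_adjoin {s : Set κ} {x : κ} (hx : x ∈ IntermediateField.adjoin k s) :
    IsAlgebraic (Algebra.adjoin k s) x :=
  isAlgebraic_adjoin_iff.mp (isAlgebraic_algebraMap (⟨x, hx⟩ : adjoin k s))

theorem subset_matroid_closure_of_subset_adjoin {s t : Set κ}
    (h : s ⊆ IntermediateField.adjoin k t) : s ⊆ (AlgebraicIndependent.matroid k κ).closure t := by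
  rw [AlgebraicIndependent.matroid_closure_eq]
  exact fun x hx => isAlgebraic_of_mem_adjoin (h hx)

theorem matroid_closure_eq_of_adjoin_eq {s t : Set κ}
    (h : IntermediateField.adjoin k s = IntermediateField.adjoin k t) :
    (AlgebraicIndependent.matroid k κ).closure s = (AlgebraicIndependent.matroid k κ).closure t :=
  (Matroid.closure_subset_closure_of_subset_closure
    (subset_matroid_closure_of_subset_adjoin (h ▸ subset_adjoin k s))).antisymm
    (Matroid.closure_subset_closure_of_subset_closure
      (subset_matroid_closure_of_subset_adjoin (h ▸ subset_adjoin k t)))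

variable {ι σ : Type*} {a : ι → κ} {φ : σ → κ}

theorem exists_superset_encard_eq_isAlgebraic (hφ : AlgebraicIndependent k φ)
    (h : adjoin k (Set.range φ) = adjoin k (Set.range a)) {J : Set σ} {e : σ → ι}
    (he : ∀ j ∈ J, a (e j) = φ j) :
    ∃ u : Set ι, e '' J ⊆ u ∧ u.encard = ENat.card σ ∧
      ∀ i, IsAlgebraic (Algebra.adjoin k (a '' u)) (a i) := by
  let M := AlgebraicIndependent.matroid k κ
  have hindep : M.Indep (Set.range φ) := hφ.to_subtype_range
  have himage : a '' (e '' J) = φ '' J := by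
    rw [Set.image_image]
    exact Set.image_congr he
  have hJ : (M.comap a).Indep (e '' J) := by
    refine ⟨himage ▸ hindep.subset (Set.image_subset_range φ J), ?_⟩
    rintro _ ⟨i, hi, rfl⟩ _ ⟨j, hj, rfl⟩ hij
    rw [he i hi, he j hj] at hij
    rw [hφ.injective hij]
  obtain ⟨u, hu, hJu⟩ := hJ.subset_isBasis_of_subset (Set.subset_univ _) (by simp [M])
  obtain ⟨hbasis, hinj, -⟩ := Matroid.comap_isBasis_iff.mp hu
  rw [Set.image_univ] at hbasis
  refine ⟨u, hJu, ?_, fun i => ?_⟩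
  · rw [← hinj.encard_image, hbasis.encard_eq_eRk, ← M.eRk_closure_eq,
      ← matroid_closure_eq_of_adjoin_eq h, M.eRk_closure_eq, hindep.eRk_eq_encard,
      ← Set.image_univ, hφ.injective.encard_image, Set.encard_univ]
  · exact (AlgebraicIndependent.matroid_isBasis_iff.mp hbasis).2.2 _ ⟨i, rfl⟩

theorem exists_adjoin_update_add_smul_eq [CharZero k] [Finite ι] [DecidableEq ι]
    (hcard : ENat.card ι = ENat.card σ + 2) (hφ : AlgebraicIndependent k φ)
    (h : adjoin k (Set.range φ) = adjoin k (Set.range a)) {J : Set σ} {e : σ → ι}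
    (he : ∀ j ∈ J, a (e j) = φ j) :
    ∃ i₀ i₁, i₀ ≠ i₁ ∧ i₀ ∉ e '' J ∧ i₁ ∉ e '' J ∧ ∃ c : k,
      adjoin k (Function.update a i₀ (a i₀ + c • a i₁) '' {i₁}ᶜ) = adjoin k (Set.range a) := by
  obtain ⟨u, hJu, hu, halg⟩ := exists_superset_encard_eq_isAlgebraic hφ h he
  have htwo : uᶜ.encard = 2 := by
    have hadd := Set.encard_add_encard_compl u
    rw [hu, Set.encard_univ, hcard] at hadd
    have hfin : ENat.card σ ≠ ⊤ := hu ▸ (Set.toFinite u).encard_lt_top.ne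
    exact ENat.add_right_injective_of_ne_top hfin hadd
  obtain ⟨i₀, i₁, hne, hu⟩ := Set.encard_eq_two.mp htwo
  have hnotMem {i : ι} (hi : i ∈ uᶜ) : i ∉ e '' J := fun h => hi (hJu h)
  have halgF (i : ι) : IsAlgebraic (adjoin k (a '' u)) (a i) :=
    isAlgebraic_adjoin_iff.mpr (halg i)
  obtain ⟨c, hc⟩ := exists_adjoin_simple_add_smul_eq_adjoin_pair k (halgF i₀) (halgF i₁)
  refine ⟨i₀, i₁, hne, hnotMem (by simp [hu]), hnotMem (by simp [hu]), c, ?_⟩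
  have hc := congrArg (restrictScalars k) hc
  rw [adjoin_adjoin_left, adjoin_adjoin_left] at hc
  obtain rfl : u = {i₀, i₁}ᶜ := by rw [← hu, compl_compl]
  convert hc using 2
  · ext z
    simp only [Set.mem_image, Set.mem_union, Set.mem_compl_iff, Set.mem_insert_iff,
      Set.mem_singleton_iff, Function.update_apply]
    grind
  · rw [← Set.image_pair, ← Set.image_union, Set.compl_union_self, Set.image_univ]

variable {E : Type*} [CommRing E] [Algebra k E] (res : E →ₐ[k] κ) [IsLocalHom res]
  [CharZero k] [Finite ι]

theorem exists_localAdjoin_eq_forall_mem_residue_eq (hcard : ENat.card ι = ENat.card σ + 2)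
    (hφ : AlgebraicIndependent k φ) (v : ι → E)
    (h : adjoin k (Set.range φ) = adjoin k (res '' Set.range v)) (J : Finset σ) :
    ∃ v' : ι → E, localAdjoin k (Set.range v') = localAdjoin k (Set.range v) ∧
      ∃ e : σ → ι, ∀ j ∈ J, res (v' (e j)) = φ j := by
  classical
  induction J using Finset.induction with
  | empty =>
    have : Nonempty ι := (ENat.card_ne_zero_iff_nonempty ι).mp (by simp [hcard])
    exact ⟨v, rfl, fun _ => Classical.arbitrary ι, by simp⟩
  | insert j₀ J hj₀ ih =>
    obtain ⟨v', hv', e, he⟩ := ih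
    have hadj := h.trans (adjoin_residue_eq_of_localAdjoin_eq res hv').symm
    rw [← Set.range_comp] at hadj
    obtain ⟨i₀, i₁, hne, hi₀, hi₁, c, hc⟩ :=
      exists_adjoin_update_add_smul_eq (J := J) hcard hφ hadj he
    have hi₁w : v' i₁ ∈ localAdjoin k (v' '' {i₀}ᶜ) := subset_localAdjoin ⟨i₁, hne.symm, rfl⟩
    let w := Function.update v' i₀ (v' i₀ + c • v' i₁)
    have hw : localAdjoin k (Set.range w) = localAdjoin k (Set.range v') :=
      localAdjoin_range_update v' i₀ (Subalgebra.smul_mem _ hi₁w c)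
    have hres : res ∘ w =
        Function.update (res ∘ v') i₀ ((res ∘ v') i₀ + c • (res ∘ v') i₁) := by
      simp only [w, Function.comp_update, map_add, map_smul, Function.comp_apply]
    have hmem : φ j₀ - res (v' i₁) ∈ adjoin k (res '' (w '' {i₁}ᶜ)) := by
      rw [← Set.image_comp, hres, hc]
      exact sub_mem (hadj ▸ subset_adjoin k _ ⟨j₀, rfl⟩) (subset_adjoin k _ ⟨i₁, rfl⟩)
    obtain ⟨z, hz, hzres⟩ := exists_mem_localAdjoin_residue_eq res hmem
    refine ⟨Function.update w i₁ (w i₁ + z),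
      (localAdjoin_range_update w i₁ hz).trans (hw.trans hv'),
      Function.update e j₀ i₁, fun j hj => ?_⟩
    rcases eq_or_ne j j₀ with rfl | hjj₀
    · simp [w, hne.symm, hzres]
    · have hjJ := Finset.mem_of_mem_insert_of_ne hj hjj₀
      have hj₀ : e j ≠ i₀ := fun h => hi₀ ⟨j, hjJ, h⟩
      have hj₁ : e j ≠ i₁ := fun h => hi₁ ⟨j, hjJ, h⟩
      simp [w, hjj₀, hj₀, hj₁, he j hjJ]

theorem exists_localAdjoin_union_pair_eq [Finite σ] (hcard : ENat.card ι = ENat.card σ + 2)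
    (hφ : AlgebraicIndependent k φ) (v : ι → E)
    (h : adjoin k (Set.range φ) = adjoin k (res '' Set.range v)) :
    ∃ (x : σ → E) (A B : E), (∀ j, res (x j) = φ j) ∧ res A = 0 ∧ res B = 0 ∧
      localAdjoin k (Set.range x ∪ {A, B}) = localAdjoin k (Set.range v) := by
  cases nonempty_fintype σ
  obtain ⟨v', hv', e, he⟩ :=
    exists_localAdjoin_eq_forall_mem_residue_eq res hcard hφ v h Finset.univ
  have he (j : σ) : res (v' (e j)) = φ j := he j (Finset.mem_univ j)
  have hinj : Function.Injective e := fun i j hij => hφ.injective (by rw [← he, ← he, hij])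
  have htwo : (Set.range e)ᶜ.encard = 2 := by
    have hadd := Set.encard_add_encard_compl (Set.range e)
    rw [← Set.image_univ, hinj.encard_image, Set.encard_univ, Set.encard_univ, hcard] at hadd
    have hfin : ENat.card σ ≠ ⊤ := by simp
    simpa using ENat.add_right_injective_of_ne_top hfin hadd
  obtain ⟨i₀, i₁, -, hi⟩ := Set.encard_eq_two.mp htwo
  have hrange : Set.range v' = Set.range (v' ∘ e) ∪ {v' i₀, v' i₁} := by
    rw [Set.range_comp, ← Set.image_pair, ← Set.image_union, ← hi, Set.union_compl_self,
      Set.image_univ]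
  have hlift (i : ι) : ∃ z ∈ localAdjoin k (Set.range (v' ∘ e)), res z = res (v' i) := by
    apply exists_mem_localAdjoin_residue_eq
    rw [← Set.range_comp, show res ∘ v' ∘ e = φ from funext he, h,
      ← adjoin_residue_eq_of_localAdjoin_eq res hv']
    exact subset_adjoin k _ ⟨_, ⟨i, rfl⟩, rfl⟩
  obtain ⟨z₀, hz₀, hres₀⟩ := hlift i₀
  obtain ⟨z₁, hz₁, hres₁⟩ := hlift i₁
  refine ⟨v' ∘ e, v' i₀ - z₀, v' i₁ - z₁, he, by simp [hres₀], by simp [hres₁], ?_⟩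
  rw [localAdjoin_union_pair_sub hz₀ hz₁, ← hrange, hv']

end Exchange

section BlowUp

theorem transcendental_of_mul_add_mul_eq {M κ : Type*} [Field M] [Field κ] [Algebra M κ]
    {α β γ δ : M} {y z : κ} (h : z * (algebraMap M κ α + algebraMap M κ β * y) =
      algebraMap M κ γ + algebraMap M κ δ * y) (hy : algebraMap M κ α + algebraMap M κ β * y ≠ 0)
    (hz : Transcendental M z) : Transcendental M y := by
  intro halg
  have hlin (α β : M) : IsAlgebraic M (algebraMap M κ α + algebraMap M κ β * y) :=
    isAlgebraic_algebraMap α |>.add ((isAlgebraic_algebraMap β).mul halg)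
  refine hz ?_
  rw [eq_div_of_mul_eq hy h, div_eq_mul_inv]
  exact (hlin γ δ).mul (hlin α β).inv

variable {k E κ σ : Type*} [Field k] [CommRing E] [IsDomain E] [Algebra k E] [Field κ]
  [Algebra k κ] (res : E →ₐ[k] κ) [IsLocalHom res] {x : σ → E} {π a b t : E}

theorem exists_eq_mul_add_mul (hx : AlgebraicIndependent k (res ∘ x)) (hπ : res π = 0)
    (hπ₀ : π ≠ 0) (ht : t * π ∈ localAdjoin k (Set.range x ∪ {π * a, π * b})) :
    ∃ α ∈ localAdjoin k (Set.range x ∪ {π * a, π * b}),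
      ∃ β ∈ localAdjoin k (Set.range x ∪ {π * a, π * b}), t = α * a + β * b := by
  have hker : ∀ y ∈ ({π * a, π * b} : Set E), res y = 0 := by simp [hπ]
  obtain ⟨y, hy, hmem⟩ := exists_sub_mem_span_of_mem_localAdjoin res hker ht
  have hres := residue_eq_zero_of_mem_span res hker hmem
  rw [map_sub, map_mul, hπ, mul_zero, zero_sub, neg_eq_zero] at hres
  rw [eq_zero_of_mem_localAdjoin_range res hx hy hres, sub_zero] at hmem
  obtain ⟨α, β, h⟩ := Submodule.mem_span_pair.mp hmem
  refine ⟨α, α.2, β, β.2, mul_right_cancel₀ hπ₀ ?_⟩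
  rw [← h, Algebra.smul_def, Algebra.smul_def]
  change (α : E) * _ + β * _ = _
  ring

theorem exists_mul_eq_transcendental (hx : AlgebraicIndependent k (res ∘ x)) (hπ : res π = 0)
    (hπ₀ : π ≠ 0) (hπV : π ∈ localAdjoin k (Set.range x ∪ {π * a, π * b}))
    (htV : t * π ∈ localAdjoin k (Set.range x ∪ {π * a, π * b}))
    (ht : Transcendental (IntermediateField.adjoin k (Set.range (res ∘ x))) (res t))
    (ha : res a ≠ 0) :
    ∃ c, a * c = b ∧ t ∈ localAdjoin k (Set.range x ∪ {π * a, c}) ∧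
      Transcendental (IntermediateField.adjoin k (Set.range (res ∘ x))) (res c) := by
  obtain ⟨α, hα, β, hβ, hone⟩ := exists_eq_mul_add_mul res (t := 1) hx hπ hπ₀ (by rwa [one_mul])
  obtain ⟨γ, hγ, δ, hδ, ht_eq⟩ := exists_eq_mul_add_mul res hx hπ hπ₀ htV
  obtain ⟨u, rfl⟩ := isUnit_of_map_unit res a (isUnit_iff_ne_zero.mpr ha)
  obtain ⟨c, rfl⟩ : ∃ c, ↑u * c = b := ⟨↑u⁻¹ * b, u.mul_inv_cancel_left b⟩
  have hres {z : E} (hz : z ∈ localAdjoin k (Set.range x ∪ {π * u, π * (u * c)})) :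
      res z ∈ IntermediateField.adjoin k (Set.range (res ∘ x)) := by
    refine IntermediateField.adjoin_le_iff.mpr ?_ (residue_mem_adjoin res hz)
    rintro _ ⟨_, ⟨j, rfl⟩ | rfl | rfl, rfl⟩
    · exact IntermediateField.subset_adjoin k _ ⟨j, rfl⟩
    all_goals simp [hπ]
  have hle : localAdjoin k (Set.range x ∪ {π * u, π * (u * c)}) ≤
      localAdjoin k (Set.range x ∪ {π * u, c}) := by
    rw [← mul_assoc]
    exact localAdjoin_union_pair_mul_le
  have hc : c ∈ localAdjoin k (Set.range x ∪ {π * u, c}) := subset_localAdjoin (by simp)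
  have hunit : IsUnit (α + β * c) :=
    IsUnit.of_mul_eq_one (u : E) (by rw [hone]; ring)
  have hquot : t * (α + β * c) = γ + δ * c := by
    refine u.isUnit.mul_right_cancel ?_
    linear_combination ht_eq - t * hone
  refine ⟨c, rfl, mem_localAdjoin_of_mul_eq (add_mem (hle hγ) (mul_mem (hle hδ) hc))
    (add_mem (hle hα) (mul_mem (hle hβ) hc)) hunit hquot,
    transcendental_of_mul_add_mul_eq (α := ⟨_, hres hα⟩) (β := ⟨_, hres hβ⟩) (γ := ⟨_, hres hγ⟩)
      (δ := ⟨_, hres hδ⟩) ?_ ?_ ht⟩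
  · simpa using congrArg res hquot
  · simpa using (hunit.map res).ne_zero

theorem exists_localAdjoin_le_transcendental {ι : Type*} [Finite σ] [Finite ι] [CharZero k]
    {φ : σ → κ} (hcard : ENat.card ι = ENat.card σ + 2) (hφ : AlgebraicIndependent k φ)
    (v : ι → E) (h : IntermediateField.adjoin k (Set.range φ) =
      IntermediateField.adjoin k (res '' Set.range v))
    (hker : ∀ z, res z = 0 ↔ π ∣ z) (hπ₀ : π ≠ 0)
    (hπV : π ∈ localAdjoin k (Set.range v)) (htV : t * π ∈ localAdjoin k (Set.range v))
    (ht : Transcendental (IntermediateField.adjoin k (Set.range φ)) (res t)) :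
    ∃ (x : σ → E) (A c : E), res ∘ x = φ ∧ res A = 0 ∧ A ≠ 0 ∧
      Transcendental (IntermediateField.adjoin k (Set.range φ)) (res c) ∧
      localAdjoin k (Set.range v) ≤ localAdjoin k (Set.range x ∪ {A, c}) ∧
      t ∈ localAdjoin k (Set.range x ∪ {A, c}) := by
  have hπ : res π = 0 := (hker π).mpr dvd_rfl
  obtain ⟨x, A, B, hx, hA, hB, hV⟩ := exists_localAdjoin_union_pair_eq res hcard hφ v h
  obtain ⟨a, rfl⟩ := (hker A).mp hA
  obtain ⟨b, rfl⟩ := (hker B).mp hB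
  obtain rfl : res ∘ x = φ := funext hx
  rw [← hV] at hπV htV ⊢
  have hne : res a ≠ 0 ∨ res b ≠ 0 := by
    obtain ⟨α, -, β, -, hone⟩ := exists_eq_mul_add_mul res (t := 1) hφ hπ hπ₀ (by rwa [one_mul])
    by_contra! hab
    simpa [hab] using congrArg res hone
  wlog ha : res a ≠ 0 generalizing a b
  · rw [Set.pair_comm] at hV hπV htV ⊢
    exact this b hB a htV hπV hA hV hne.symm (hne.resolve_left ha)
  obtain ⟨c, rfl, htc, hc⟩ := exists_mul_eq_transcendental res hφ hπ hπ₀ hπV htV ht ha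
  refine ⟨x, π * a, c, rfl, hA, mul_ne_zero hπ₀ fun h0 => ha (by rw [h0, map_zero]), hc, ?_, htc⟩
  rw [← mul_assoc]
  exact localAdjoin_union_pair_mul_le

end BlowUp

section AffineChart

variable {k E κ : Type*} [Field k] [CommRing E] [Algebra k E] [Field κ] [Algebra k κ]

theorem algebraicIndependent_cons_iff_transcendental {m : ℕ} {φ : Fin m → E} {z : E}
    (hφ : AlgebraicIndependent k φ) : AlgebraicIndependent k (Fin.cons z φ : Fin (m + 1) → E) ↔
      Transcendental (Algebra.adjoin k (Set.range φ)) z := by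
  have hcomp : (Fin.cons z φ : Fin (m + 1) → E) ∘ (finSuccEquiv m).symm = fun o => o.elim z φ := by
    ext o
    cases o <;> simp
  rw [← hφ.option_iff_transcendental, ← hcomp, algebraicIndependent_equiv]

theorem exists_mul_aeval_eq_of_mem_localAdjoin {ι σ : Type*} [Finite ι] {v : σ → E} {w : ι → E}
    (h : ∀ i, w i ∈ localAdjoin k (Set.range v)) :
    ∃ (P : ι → MvPolynomial σ k) (Q : MvPolynomial σ k),
      IsUnit (aeval v Q) ∧ ∀ i, w i * aeval v Q = aeval v (P i) := by
  classical
  cases nonempty_fintype ι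
  choose P Q hQ hPQ using fun i => mem_localAdjoin_range_iff.mp (h i)
  refine ⟨fun i => P i * ∏ j ∈ Finset.univ.erase i, Q j, ∏ j, Q j, ?_, fun i => ?_⟩
  · rw [map_prod, IsUnit.prod_univ_iff]
    exact hQ
  · rw [← Finset.mul_prod_erase _ _ (Finset.mem_univ i), map_mul, map_mul, ← mul_assoc, hPQ]

theorem X_zero_dvd_of_aeval_cons_zero_eq_zero {m : ℕ} {φ : Fin m → E}
    (hφ : AlgebraicIndependent k φ) {p : MvPolynomial (Fin (m + 1)) k}
    (h : aeval (Fin.cons 0 φ : Fin (m + 1) → E) p = 0) : X 0 ∣ p := by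
  let s : MvPolynomial (Fin (m + 1)) k →ₐ[k] MvPolynomial (Fin m) k := aeval (Fin.cons 0 X)
  have hs : s p = 0 := by
    refine (injective_iff_map_eq_zero _).mp hφ _ ?_
    rw [comp_aeval_apply, ← h]
    congr 2
    ext i
    cases i using Fin.cases <;> simp
  let q := Ideal.Quotient.mkₐ k (Ideal.span {(X 0 : MvPolynomial (Fin (m + 1)) k)})
  have hq : q = q.comp ((rename Fin.succ).comp s) := by
    refine algHom_ext fun i => ?_
    cases i using Fin.cases with
    | zero => simp [q, s]
    | succ i => simp [s]
  rw [← Ideal.mem_span_singleton, ← Ideal.Quotient.eq_zero_iff_mem]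
  change q p = 0
  rw [hq, AlgHom.comp_apply, AlgHom.comp_apply, hs, map_zero, map_zero]

variable [IsDomain E] (res : E →ₐ[k] κ)

theorem transcendental_of_residue_eq_zero {S : Type*} [CommRing S] [Algebra S E]
    (hS : ∀ s : S, res (algebraMap S E s) = 0 → s = 0) {A : E} (hA : res A = 0) (hA₀ : A ≠ 0) :
    Transcendental S A := by
  rintro ⟨p, hp, hpA⟩
  obtain ⟨q, hpq, hq⟩ := Polynomial.exists_eq_pow_rootMultiplicity_mul_and_not_dvd p hp 0
  rw [Polynomial.C_0, sub_zero] at hpq hq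
  rw [hpq, map_mul, map_pow, Polynomial.aeval_X] at hpA
  have hqA := (mul_eq_zero.mp hpA).resolve_left (pow_ne_zero _ hA₀)
  refine hq (Polynomial.X_dvd_iff.mpr (hS _ ?_))
  have hres := congrArg res hqA
  rw [← q.divX_mul_X_add] at hres
  simpa [hA] using hres

theorem algebraicIndependent_cons_of_residue {m : ℕ} {x : Fin m → E} {A : E}
    (hx : AlgebraicIndependent k (res ∘ x)) (hA : res A = 0) (hA₀ : A ≠ 0) :
    AlgebraicIndependent k (Fin.cons A x : Fin (m + 1) → E) := by
  rw [algebraicIndependent_cons_iff_transcendental (hx.of_comp res)]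
  refine transcendental_of_residue_eq_zero res (fun s hs => Subtype.ext ?_) hA hA₀
  exact eq_zero_of_mem_localAdjoin_range res hx (adjoin_le_localAdjoin s.2) hs

end AffineChart

section CremonaOfChart

variable {k : Type} [Field k] {E κ : Type*} [CommRing E] [Algebra k E] [Field κ] [Algebra k κ]
  {n m d e : ℕ}

theorem exists_ratMap_aeval_eq {ξ : Fin n → E} {w : Fin m → E}
    (h : ∀ i, w i ∈ localAdjoin k (Set.range ξ)) :
    ∃ (F : RatMap k n m) (u : E), IsUnit u ∧ (fun i => aeval (Fin.cons 1 ξ) (F.comp i)) =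
      fun i => u * (Fin.cons 1 w : Fin (m + 1) → E) i := by
  obtain ⟨P, Q, hQ, hPQ⟩ := exists_mul_aeval_eq_of_mem_localAdjoin h
  obtain ⟨d, F, hF, hFP⟩ :=
    exists_isHomogeneous_dehomogenize_eq_family (Fin.cons Q P : Fin (m + 1) → MvPolynomial _ k)
  refine ⟨⟨d, F, hF⟩, aeval ξ Q, hQ, funext fun i => ?_⟩
  rw [← aeval_dehomogenize, hFP]
  cases i using Fin.cases <;> simp [mul_comm, hPQ]

theorem eq_zero_of_aeval_cons_one_eq_zero {ξ : Fin n → E} (hξ : AlgebraicIndependent k ξ)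
    {p : MvPolynomial (Fin (n + 1)) k} (hp : p.IsHomogeneous d)
    (h : aeval (Fin.cons 1 ξ : Fin (n + 1) → E) p = 0) : p = 0 :=
  eq_zero_of_dehomogenize_eq_zero hp <|
    (injective_iff_map_eq_zero _).mp hξ _ (by rw [aeval_dehomogenize, h])

theorem residue_aeval_cons_one_eq_zero_iff {f : MvPolynomial (Fin (n + 1)) k} (hf : Prime f)
    (hfd : f.IsHomogeneous d) (hfX : ¬ f ∣ X 0) {res : E →ₐ[k] κ} {ξ : Fin n → E}
    (hξf : ∀ P, res (aeval ξ P) = 0 ↔ dehomogenize k n f ∣ P)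
    {p : MvPolynomial (Fin (n + 1)) k} (hp : p.IsHomogeneous e) :
    res (aeval (Fin.cons 1 ξ : Fin (n + 1) → E) p) = 0 ↔ f ∣ p := by
  rw [← aeval_dehomogenize, hξf]
  exact ⟨dvd_of_dehomogenize_dvd hf hfd hfX hp, map_dvd _⟩

theorem nonempty_cremonaData_of_localAdjoin_eq {f g : MvPolynomial (Fin (n + 1)) k}
    (hf : Prime f) (hfd : f.IsHomogeneous d) (hfX : ¬ f ∣ X 0)
    (hg : Prime g) (hge : g.IsHomogeneous e) (hgX : ¬ g ∣ X 0) (res : E →ₐ[k] κ) {ξ w : Fin n → E}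
    (hξ : AlgebraicIndependent k ξ) (hw : AlgebraicIndependent k w)
    (hξf : ∀ P, res (aeval ξ P) = 0 ↔ dehomogenize k n f ∣ P)
    (hwg : ∀ P, res (aeval w P) = 0 ↔ dehomogenize k n g ∣ P)
    (h : localAdjoin k (Set.range ξ) = localAdjoin k (Set.range w)) :
    Nonempty (CremonaData f g) := by
  obtain ⟨F, u, hu, hF⟩ := exists_ratMap_aeval_eq fun i =>
    h.ge (subset_localAdjoin (Set.mem_range_self i))
  obtain ⟨G, v, hv, hG⟩ := exists_ratMap_aeval_eq fun i =>
    h.le (subset_localAdjoin (Set.mem_range_self i))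
  have hcomp {c : ℕ} {p : MvPolynomial (Fin (n + 1)) k} (hp : p.IsHomogeneous c) :
      aeval (Fin.cons 1 ξ : Fin (n + 1) → E) (aeval F.comp p) =
        u ^ c * aeval (Fin.cons 1 w : Fin (n + 1) → E) p := by
    rw [comp_aeval_apply, hF, aeval_const_mul_of_isHomogeneous hp]
  have hres {z : E} (hz : IsUnit z) : res z ≠ 0 := (hz.map res).ne_zero
  have hhom (i : Fin (n + 1)) := (G.homog i).aeval _ F.homog
  have hGF (i : Fin (n + 1)) : aeval (Fin.cons 1 ξ : Fin (n + 1) → E) (aeval F.comp (G.comp i)) =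
      u ^ G.deg * (v * (Fin.cons 1 ξ : Fin (n + 1) → E) i) :=
    (hcomp (G.homog i)).trans (congrArg _ (congrFun hG i))
  refine ⟨{ F, G, num := aeval F.comp (G.comp 0), den := X 0, degNum := _
            isHomogeneous_num := hhom 0, not_dvd_num := ?_, not_dvd_den := hfX
            den_mul_eq := fun i => ?_, eq_zero_of_aeval_eq_zero := fun {c p} hp h0 => ?_
            dvd_aeval_iff := fun {c p} hp => ?_ }⟩
  · rw [← residue_aeval_cons_one_eq_zero_iff hf hfd hfX hξf (hhom 0), hGF 0]
    exact hres (by simpa using (hu.pow _).mul hv)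
  · rw [← sub_eq_zero]
    refine eq_zero_of_aeval_cons_one_eq_zero hξ (((isHomogeneous_X k 0).mul (hhom i)).sub ?_) ?_
    · rw [mul_comm]
      exact (isHomogeneous_X k i).mul (hhom 0)
    · simp only [map_sub, map_mul, hGF, aeval_X, Fin.cons_zero]
      ring
  · refine eq_zero_of_aeval_cons_one_eq_zero hw hp ?_
    rw [← (hu.pow c).mul_right_eq_zero, ← hcomp hp, h0, map_zero]
  · rw [← residue_aeval_cons_one_eq_zero_iff hf hfd hfX hξf (hp.aeval _ F.homog),
      ← residue_aeval_cons_one_eq_zero_iff hg hge hgX hwg hp, hcomp hp, map_mul,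
      mul_eq_zero_iff_left (hres (hu.pow c))]

theorem nonempty_cremonaData_X_one [IsDomain E] {f : MvPolynomial (Fin (n + 1 + 1)) k}
    (hf : Prime f) (hfd : f.IsHomogeneous d) (hfX : ¬ f ∣ X 0) (res : E →ₐ[k] κ)
    {ξ : Fin (n + 1) → E} (hξ : AlgebraicIndependent k ξ)
    (hξf : ∀ P, res (aeval ξ P) = 0 ↔ dehomogenize k (n + 1) f ∣ P) {x : Fin n → E} {A : E}
    (hx : AlgebraicIndependent k (res ∘ x)) (hA : res A = 0) (hA₀ : A ≠ 0)
    (h : localAdjoin k (Set.range ξ) = localAdjoin k (Set.range (Fin.cons A x : Fin (n + 1) → E))) :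
    Nonempty (CremonaData f (X 1)) := by
  have hw := algebraicIndependent_cons_of_residue res hx hA hA₀
  refine nonempty_cremonaData_of_localAdjoin_eq hf hfd hfX X_prime (isHomogeneous_X k 1)
    (by simp [X_dvd_X]) res hξ hw hξf (fun P => ?_) h
  have hcons : res ∘ (Fin.cons A x : Fin (n + 1) → E) = Fin.cons 0 (res ∘ x) := by
    rw [← hA]
    exact Fin.comp_cons ..
  rw [← Fin.succ_zero_eq_one, dehomogenize_X_succ, comp_aeval_apply]
  change aeval (res ∘ _) P = 0 ↔ _
  rw [hcons]
  refine ⟨X_zero_dvd_of_aeval_cons_zero_eq_zero hx, fun hP => ?_⟩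
  simpa using map_dvd (aeval (Fin.cons 0 (res ∘ x) : Fin (n + 1) → κ)) hP

end CremonaOfChart

section Chart

variable {k : Type} [Field k] {E κ : Type*} [CommRing E] [IsDomain E] [Algebra k E] [Field κ]
  [Algebra k κ] {m d : ℕ}

theorem nonempty_cremonaData_of_adjoin_residue_eq [CharZero k]
    {f : MvPolynomial (Fin (m + 2 + 1)) k} (hf : Prime f) (hfd : f.IsHomogeneous d)
    (hfX : ¬ f ∣ X 0) (res : E →ₐ[k] κ) [IsLocalHom res] {ξ : Fin (m + 2) → E}
    (hξ : AlgebraicIndependent k ξ)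
    (hξf : ∀ P, res (aeval ξ P) = 0 ↔ dehomogenize k (m + 2) f ∣ P)
    (hker : ∀ z, res z = 0 ↔ aeval ξ (dehomogenize k (m + 2) f) ∣ z)
    (htop : ∀ z, z ∈ localAdjoin k (Set.range ξ))
    (hsupp : aeval ξ (dehomogenize k (m + 2) f) ∈ Algebra.adjoin k (Set.range (Fin.tail ξ)))
    {φ : Fin m → κ} (hφ : AlgebraicIndependent k (Fin.cons (res (ξ 0)) φ : Fin (m + 1) → κ))
    (h : IntermediateField.adjoin k (Set.range φ) =
      IntermediateField.adjoin k (Set.range (res ∘ Fin.tail ξ))) :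
    Nonempty (CremonaData f (X 1)) := by
  set π := aeval ξ (dehomogenize k (m + 2) f)
  have hπ : res π = 0 := (hker π).mpr dvd_rfl
  have hπ₀ : π ≠ 0 := fun h0 => (prime_dehomogenize hf hfd hfX).ne_zero <|
    (injective_iff_map_eq_zero _).mp hξ _ h0
  have hφ₁ : AlgebraicIndependent k φ := hφ.comp Fin.succ (Fin.succ_injective m)
  let v : Fin (m + 2) → E := Fin.cons (ξ 0 * π) (Fin.tail ξ)
  have hrange : Set.range v = insert (ξ 0 * π) (Set.range (Fin.tail ξ)) := Fin.range_cons ..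
  have hV : localAdjoin k (Set.range (Fin.tail ξ)) ≤ localAdjoin k (Set.range v) :=
    localAdjoin_mono (hrange ▸ Set.subset_insert ..)
  have htrans (z : κ) : Transcendental (IntermediateField.adjoin k (Set.range φ)) z ↔
      AlgebraicIndependent k (Fin.cons z φ : Fin (m + 1) → κ) :=
    IntermediateField.isAlgebraic_adjoin_iff.not.trans
      (algebraicIndependent_cons_iff_transcendental hφ₁).symm
  have hadj : IntermediateField.adjoin k (Set.range φ) =
      IntermediateField.adjoin k (res '' Set.range v) := by
    rw [h, hrange, Set.image_insert_eq, map_mul, hπ, mul_zero, ← Set.range_comp]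
    refine le_antisymm (IntermediateField.adjoin.mono _ _ _ (Set.subset_insert _ _)) ?_
    rw [IntermediateField.adjoin_le_iff]
    exact Set.insert_subset (zero_mem _) (IntermediateField.subset_adjoin _ _)
  obtain ⟨x, A, c, rfl, hA, hA₀, hc, hle, ht⟩ := exists_localAdjoin_le_transcendental res
    (t := ξ 0) (by simp) hφ₁ v hadj hker hπ₀ (hV (adjoin_le_localAdjoin hsupp))
    (subset_localAdjoin ⟨0, rfl⟩) ((htrans _).mpr hφ)
  have hw : Set.range x ∪ {A, c} =
      Set.range (Fin.cons A (Fin.cons c x) : Fin (m + 2) → E) := by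
    rw [Fin.range_cons, Fin.range_cons, Set.union_comm, Set.insert_union, Set.singleton_union]
  refine nonempty_cremonaData_X_one hf hfd hfX res hξ hξf (x := Fin.cons c x) ?_ hA hA₀
    (le_antisymm ?_ fun z _ => htop z)
  · rw [Fin.comp_cons]
    exact (htrans _).mp hc
  · rw [← hw, localAdjoin_le_iff, ← Fin.cons_self_tail ξ, Fin.range_cons]
    exact Set.insert_subset ht fun z hz => hle (hV (subset_localAdjoin hz))

end Chart

theorem aeval_mem_adjoin_range {R A σ : Type*} [CommRing R] [CommRing A] [Algebra R A]
    (x : σ → A) (q : MvPolynomial σ R) : aeval x q ∈ Algebra.adjoin R (Set.range x) := by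
  rw [Algebra.adjoin_range_eq_range_aeval]
  exact ⟨q, rfl⟩

theorem aeval_mem_adjoin_image_of_mem_supported {R A σ : Type*} [CommRing R] [CommRing A]
    [Algebra R A] {s : Set σ} {q : MvPolynomial σ R} (hq : q ∈ supported R s) (x : σ → A) :
    aeval x q ∈ Algebra.adjoin R (x '' s) := by
  have hmap : aeval x q ∈ (supported R s).map (aeval x) := Subalgebra.mem_map.mpr ⟨q, hq, rfl⟩
  rw [supported, AlgHom.map_adjoin, Set.image_image] at hmap
  simpa only [aeval_X] using hmap

section GenericZero

variable {k σ : Type*} [Field k] {p : MvPolynomial σ k} [(Ideal.span {p}).IsPrime]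

theorem aeval_algebraMap_X {A : Type*} [CommRing A] [Algebra k A] [Algebra (MvPolynomial σ k) A]
    [IsScalarTower k (MvPolynomial σ k) A] (q : MvPolynomial σ k) :
    aeval (algebraMap (MvPolynomial σ k) A ∘ X) q = algebraMap _ A q := by
  rw [aeval_algebraMap_apply, aeval_X_left_apply]

theorem mem_localAdjoin_range_algebraMap_X (z : Localization.AtPrime (Ideal.span {p})) :
    z ∈ localAdjoin k (Set.range (algebraMap (MvPolynomial σ k)
      (Localization.AtPrime (Ideal.span {p})) ∘ X)) := by
  obtain ⟨P, Q, rfl⟩ := IsLocalization.exists_mk'_eq (Ideal.span {p}).primeCompl z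
  refine mem_localAdjoin_range_iff.mpr ⟨P, Q, ?_, ?_⟩
  · rw [aeval_algebraMap_X]
    exact IsLocalization.map_units _ Q
  · rw [aeval_algebraMap_X, aeval_algebraMap_X, IsLocalization.mk'_spec]

theorem residue_eq_zero_iff_dvd (z : Localization.AtPrime (Ideal.span {p})) :
    IsLocalRing.residue _ z = 0 ↔ algebraMap (MvPolynomial σ k) _ p ∣ z := by
  rw [IsLocalRing.residue_eq_zero_iff, ← Localization.AtPrime.map_eq_maximalIdeal, Ideal.map_span,
    Set.image_singleton, Ideal.mem_span_singleton]

/-- The generic point of the hypersurface `V(p)` in affine space: its coordinates are the coordinate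
functions, viewed in the function field of `V(p)`, which is the residue field of the ideal `(p)`. -/
noncomputable def genericZero (p : MvPolynomial σ k) [(Ideal.span {p}).IsPrime] :
    σ → (Ideal.span {p}).ResidueField :=
  algebraMap (MvPolynomial σ k) _ ∘ X

theorem aeval_genericZero_eq_zero_iff (q : MvPolynomial σ k) :
    aeval (genericZero p) q = 0 ↔ p ∣ q := by
  rw [genericZero, aeval_algebraMap_X, Ideal.algebraMap_residueField_eq_zero,
    Ideal.mem_span_singleton]

theorem adjoin_range_genericZero : IntermediateField.adjoin k (Set.range (genericZero p)) = ⊤ := by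
  let res := IsScalarTower.toAlgHom k (Localization.AtPrime (Ideal.span {p}))
    (Ideal.span {p}).ResidueField
  refine eq_top_iff.mpr fun c _ => ?_
  obtain ⟨z, rfl⟩ := IsLocalRing.residue_surjective c
  have hz := residue_mem_adjoin res (mem_localAdjoin_range_algebraMap_X z)
  rwa [← Set.range_comp] at hz

end GenericZero

theorem nonempty_cremonaData_of_adjoin_genericZero_eq {k : Type} [Field k] [CharZero k] {m d : ℕ}
    {f : MvPolynomial (Fin (m + 2 + 1)) k} (hf : Prime f) (hfd : f.IsHomogeneous d)
    (hfX : ¬ f ∣ X 0) {p : MvPolynomial (Fin (m + 2)) k} (hp : dehomogenize k (m + 2) f = p)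
    (hsupp : p ∈ supported k (Set.range Fin.succ)) [(Ideal.span {p}).IsPrime]
    {φ : Fin m → (Ideal.span {p}).ResidueField}
    (hφ : AlgebraicIndependent k (Fin.cons (genericZero p 0) φ : Fin (m + 1) → _))
    (h : IntermediateField.adjoin k (Set.range φ) =
      IntermediateField.adjoin k (Set.range (Fin.tail (genericZero p)))) :
    Nonempty (CremonaData f (X 1)) := by
  subst hp
  let E := Localization.AtPrime (Ideal.span {dehomogenize k (m + 2) f})
  let res := IsScalarTower.toAlgHom k E (Ideal.span {dehomogenize k (m + 2) f}).ResidueField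
  have : IsLocalHom res := ⟨fun a ha => isUnit_of_map_unit (IsLocalRing.residue E) a ha⟩
  let ξ : Fin (m + 2) → E := algebraMap (MvPolynomial (Fin (m + 2)) k) E ∘ X
  have hE (P : MvPolynomial (Fin (m + 2)) k) : aeval ξ P = algebraMap _ E P := aeval_algebraMap_X P
  refine nonempty_cremonaData_of_adjoin_residue_eq hf hfd hfX res (ξ := ξ) ?_ (fun P => ?_)
    (fun z => ?_) mem_localAdjoin_range_algebraMap_X ?_ hφ h
  · refine (injective_iff_map_eq_zero _).mpr fun P hP => ?_
    rw [hE] at hP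
    exact (map_eq_zero_iff _ (FaithfulSMul.algebraMap_injective _ E)).mp hP
  · rw [comp_aeval_apply]
    exact aeval_genericZero_eq_zero_iff P
  · rw [hE]
    exact residue_eq_zero_iff_dvd z
  · have hmem := aeval_mem_adjoin_image_of_mem_supported hsupp ξ
    rw [← Set.range_comp] at hmem
    exact hmem

section Dominance

variable {k κ σ : Type*} [Field k] [Field κ] [Algebra k κ]

theorem aeval_eq_pow_mul_aeval_dehomogenize {R A : Type*} [CommRing R] [CommRing A] [Algebra R A]
    {n d : ℕ} {Q : MvPolynomial (Fin (n + 1)) R} (hQ : Q.IsHomogeneous d) {c : Fin (n + 1) → A}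
    {y : Fin n → A} (h : ∀ i, c i.succ = c 0 * y i) :
    aeval c Q = c 0 ^ d * aeval y (dehomogenize R n Q) := by
  rw [aeval_dehomogenize, ← aeval_const_mul_of_isHomogeneous hQ]
  congr 2
  ext i
  cases i using Fin.cases <;> simp [h]

theorem algebraicIndependent_of_forall_exists_eval_eq [Infinite k] {p : MvPolynomial σ k}
    {η : σ → κ} (hη : ∀ q, aeval η q = 0 → p ∣ q) {n : ℕ} {N : Fin (n + 1) → MvPolynomial σ k}
    {ψ : Fin n → κ} (hψ : ∀ i, aeval η (N i.succ) = aeval η (N 0) * ψ i)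
    {h : MvPolynomial (Fin n) k} (hh : h ≠ 0)
    (hsurj : ∀ y, eval y h ≠ 0 →
      ∃ x, eval x p = 0 ∧ eval x (N 0) ≠ 0 ∧ ∀ i, eval x (N i.succ) = eval x (N 0) * y i) :
    AlgebraicIndependent k ψ := by
  refine algebraicIndependent_iff.mpr fun P hP => (mul_eq_zero.mp ?_).resolve_left hh
  obtain ⟨Q, hQ, rfl⟩ := exists_isHomogeneous_dehomogenize_eq P le_rfl
  have hpq : p ∣ aeval N Q := hη _ <| by
    rw [comp_aeval_apply, aeval_eq_pow_mul_aeval_dehomogenize hQ hψ, hP, mul_zero]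
  refine MvPolynomial.funext fun y => ?_
  rw [map_zero, map_mul, mul_eq_zero]
  refine or_iff_not_imp_left.mpr fun hy => ?_
  obtain ⟨x, hxp, hx0, hxN⟩ := hsurj y hy
  have hxQ : aeval x (aeval N Q) = 0 := zero_dvd_iff.mp (hxp ▸ map_dvd (eval x) hpq)
  rw [comp_aeval_apply, aeval_eq_pow_mul_aeval_dehomogenize hQ hxN] at hxQ
  exact (mul_eq_zero.mp hxQ).resolve_left (pow_ne_zero _ hx0)

end Dominance

section TranscendenceDegree

variable {k σ : Type*} [Field k]

theorem mem_supported_of_dvd {p q : MvPolynomial σ k} (hpq : p ∣ q) (hq : q ≠ 0) {s : Set σ}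
    (hqs : q ∈ supported k s) : p ∈ supported k s := by
  obtain ⟨r, rfl⟩ := hpq
  obtain ⟨hp, hr⟩ := mul_ne_zero_iff.mp hq
  refine mem_supported.mpr fun i hi => mem_supported.mp hqs ?_
  rw [Finset.mem_coe, mem_vars_iff_degreeOf_ne_zero] at hi ⊢
  rw [degreeOf_mul_eq hp hr]
  omega

theorem algebraicIndependent_genericZero_comp {p : MvPolynomial σ k} [(Ideal.span {p}).IsPrime]
    {ι : Type*} {e : ι → σ} (he : Function.Injective e) (hp : p ∉ supported k (Set.range e)) :
    AlgebraicIndependent k (genericZero p ∘ e) := by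
  classical
  refine algebraicIndependent_iff.mpr fun P hP => ?_
  rw [← aeval_rename, aeval_genericZero_eq_zero_iff] at hP
  by_contra hP0
  have hren : rename e P ≠ 0 := (map_ne_zero_iff _ (rename_injective e he)).mpr hP0
  refine hp (mem_supported_of_dvd hP hren (mem_supported.mpr fun i hi => ?_))
  obtain ⟨j, -, rfl⟩ := Finset.mem_image.mp (vars_rename e P hi)
  exact ⟨j, rfl⟩

theorem exists_notMem_supported_compl_of_prime {p : MvPolynomial σ k} (hp : Prime p) :
    ∃ i, p ∉ supported k {i}ᶜ := by
  by_contra! h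
  have hvars : p.vars = ∅ := Finset.eq_empty_of_forall_notMem fun i hi =>
    mem_supported.mp (h i) hi rfl
  rw [vars_eq_empty_iff_eq_C] at hvars
  refine hp.not_isUnit (hvars ▸ (isUnit_iff_ne_zero.mpr fun h0 => ?_).map C)
  exact hp.ne_zero (by rw [hvars, h0, C_0])

theorem trdeg_residueField_span_singleton {n : ℕ} {p : MvPolynomial (Fin (n + 1)) k} (hp : Prime p)
    [(Ideal.span {p}).IsPrime] : Algebra.trdeg k (Ideal.span {p}).ResidueField = n := by
  apply le_antisymm
  · by_contra! hlt
    have : Algebra.IsAlgebraic (Algebra.adjoin k (Set.range (genericZero p)))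
        (Ideal.span {p}).ResidueField :=
      ⟨fun x => isAlgebraic_of_mem_adjoin (adjoin_range_genericZero (p := p) ▸ trivial)⟩
    have hle : (n + 1 : Cardinal) ≤ Algebra.trdeg k (Ideal.span {p}).ResidueField :=
      Cardinal.add_one_le_of_lt hlt
    have hind := (Algebra.IsAlgebraic.isTranscendenceBasis_of_lift_le_trdeg_of_finite k
      (genericZero p) (by simpa using hle)).1
    exact hp.ne_zero
      (algebraicIndependent_iff.mp hind p (aeval_genericZero_eq_zero_iff p |>.mpr dvd_rfl))
  · obtain ⟨i, hi⟩ := exists_notMem_supported_compl_of_prime hp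
    have hind : AlgebraicIndependent k (genericZero p ∘ i.succAbove) :=
      algebraicIndependent_genericZero_comp Fin.succAbove_right_injective
        (by rwa [Fin.range_succAbove])
    simpa using hind.lift_cardinalMk_le_trdeg

end TranscendenceDegree

section LinearSubstitution

variable {k σ τ : Type*} [Field k] [Fintype σ] [DecidableEq σ]

/-- The pullback of polynomial functions along a linear map. -/
noncomputable def compLinear (A : (σ → k) →ₗ[k] τ → k) :
    MvPolynomial τ k →ₐ[k] MvPolynomial σ k :=
  aeval (LinearMap.toMatrix' A).toMvPolynomial

theorem eval_compLinear (A : (σ → k) →ₗ[k] τ → k) (x : σ → k) (p : MvPolynomial τ k) :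
    eval x (compLinear A p) = eval (A x) p := by
  simp only [compLinear, eval_aeval, Matrix.toMvPolynomial_eval_eq_apply,
    LinearMap.toMatrix'_mulVec]

theorem eval_aeval_compLinear_X {ι : Type*} (A : (σ → k) →ₗ[k] τ → k) (y : ι → k)
    (G : σ → MvPolynomial ι k) :
    (fun i => eval y (aeval G (compLinear A (X i)))) = A fun j => eval y (G j) := by
  ext i
  rw [eval_aeval, eval_compLinear, eval_X]

theorem isHomogeneous_compLinear (A : (σ → k) →ₗ[k] τ → k) {p : MvPolynomial τ k} {d : ℕ}
    (hp : p.IsHomogeneous d) : (compLinear A p).IsHomogeneous d := by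
  simpa only [compLinear, one_mul] using
    hp.aeval _ (LinearMap.toMatrix' A).toMvPolynomial_isHomogeneous

theorem compLinear_mem_supported (A : (σ → k) →ₗ[k] τ → k) {i : σ} (hA : A (Pi.single i 1) = 0)
    (p : MvPolynomial τ k) : compLinear A p ∈ supported k {i}ᶜ := by
  have hmem : compLinear A p ∈ Algebra.adjoin k
      (Set.range (LinearMap.toMatrix' A).toMvPolynomial) := aeval_mem_adjoin_range _ p
  refine Algebra.adjoin_le ?_ hmem
  rintro _ ⟨j, rfl⟩
  refine Subalgebra.sum_mem _ fun l _ => ?_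
  rcases eq_or_ne l i with rfl | hl
  · simp [LinearMap.toMatrix'_apply, hA]
  · rw [← C_mul_X_eq_monomial]
    exact Subalgebra.mul_mem _ (Subalgebra.algebraMap_mem _ _) (X_mem_supported.mpr hl)

theorem compLinear_symm_compLinear (L : (σ → k) ≃ₗ[k] σ → k) (p : MvPolynomial σ k) :
    compLinear L.symm.toLinearMap (compLinear L.toLinearMap p) = p := by
  have hmul : LinearMap.toMatrix' L.toLinearMap * LinearMap.toMatrix' L.symm.toLinearMap = 1 := by
    rw [← LinearMap.toMatrix'_comp, LinearEquiv.comp_symm, LinearMap.toMatrix'_id]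
  have hcomp : (compLinear L.symm.toLinearMap).comp (compLinear L.toLinearMap) =
      AlgHom.id k (MvPolynomial σ k) := by
    ext1 i
    rw [AlgHom.comp_apply, compLinear, compLinear, aeval_X, ← bind₁, ← Matrix.toMvPolynomial_mul,
      hmul, Matrix.toMvPolynomial_one, AlgHom.id_apply]
  exact DFunLike.congr_fun hcomp p

theorem prime_compLinear (L : (σ → k) ≃ₗ[k] σ → k) {p : MvPolynomial σ k}
    (hp : Prime p) : Prime (compLinear L.toLinearMap p) := by
  let ρ : MvPolynomial σ k ≃ₐ[k] MvPolynomial σ k :=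
    .ofAlgHom (compLinear L.toLinearMap) (compLinear L.symm.toLinearMap)
      (AlgHom.ext (compLinear_symm_compLinear L.symm)) (AlgHom.ext (compLinear_symm_compLinear L))
  exact (MulEquiv.prime_iff ρ).mpr hp

theorem dvd_compLinear_symm_iff (L : (σ → k) ≃ₗ[k] σ → k) {p q : MvPolynomial σ k} :
    p ∣ compLinear L.symm.toLinearMap q ↔ compLinear L.toLinearMap p ∣ q := by
  have h1 := compLinear_symm_compLinear L
  have h2 := compLinear_symm_compLinear L.symm
  rw [LinearEquiv.symm_symm] at h2
  exact ⟨fun h => h2 q ▸ map_dvd _ h, fun h => h1 p ▸ map_dvd _ h⟩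

end LinearSubstitution

theorem CremonaData.nonempty_of_compLinear {k : Type} [Field k] {n : ℕ}
    {f g : MvPolynomial (Fin (n + 1)) k} (L : (Fin (n + 1) → k) ≃ₗ[k] Fin (n + 1) → k)
    (Φ : CremonaData (compLinear L.toLinearMap f) g) : Nonempty (CremonaData f g) := by
  let ρ := compLinear L.symm.toLinearMap
  have hρF (p : MvPolynomial (Fin (n + 1)) k) :
      aeval (fun i => ρ (Φ.F.comp i)) p = ρ (aeval Φ.F.comp p) :=
    (comp_aeval_apply _ ρ p).symm
  have hX (i : Fin (n + 1)) : (compLinear L.toLinearMap (X i)).IsHomogeneous 1 :=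
    isHomogeneous_compLinear _ (isHomogeneous_X k i)
  exact ⟨{
    F := ⟨Φ.F.deg, fun i => ρ (Φ.F.comp i), fun i => isHomogeneous_compLinear _ (Φ.F.homog i)⟩
    G := ⟨_, fun i => aeval Φ.G.comp (compLinear L.toLinearMap (X i)),
      fun i => (hX i).aeval _ Φ.G.homog⟩
    num := ρ Φ.num
    den := ρ Φ.den
    degNum := Φ.degNum
    isHomogeneous_num := isHomogeneous_compLinear _ Φ.isHomogeneous_num
    not_dvd_num := mt (dvd_compLinear_symm_iff L).mp Φ.not_dvd_num
    not_dvd_den := mt (dvd_compLinear_symm_iff L).mp Φ.not_dvd_den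
    den_mul_eq i := by
      have h := congrArg ρ (Φ.den_pow_mul_aeval_aeval (hX i))
      rwa [pow_one, pow_one, map_mul, map_mul, compLinear_symm_compLinear, ← hρF] at h
    eq_zero_of_aeval_eq_zero hp h := by
      rw [hρF, ← zero_dvd_iff, dvd_compLinear_symm_iff, map_zero, zero_dvd_iff] at h
      exact Φ.eq_zero_of_aeval_eq_zero hp h
    dvd_aeval_iff hp := by
      rw [hρF, dvd_compLinear_symm_iff, Φ.dvd_aeval_iff hp] }⟩

section Supported

variable {k : Type*} [Field k]

theorem eval_update_of_mem_supported_compl {σ : Type*} [DecidableEq σ] {i : σ}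
    {q : MvPolynomial σ k} (hq : q ∈ supported k {i}ᶜ) (x : σ → k) (s : k) :
    eval (Function.update x i s) q = eval x q :=
  eval₂Hom_congr' rfl (fun _ hj _ => Function.update_of_ne (mem_supported.mp hq hj) s x) rfl

theorem dehomogenize_mem_supported_range_succ {n : ℕ} {q : MvPolynomial (Fin (n + 2)) k}
    (hq : q ∈ supported k {1}ᶜ) :
    dehomogenize k (n + 1) q ∈ supported k (Set.range Fin.succ) := by
  refine Algebra.adjoin_le ?_ (aeval_mem_adjoin_image_of_mem_supported hq _)
  rintro _ ⟨i, hi, rfl⟩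
  cases i using Fin.cases with
  | zero => simp
  | succ i =>
    cases i using Fin.cases with
    | zero => exact absurd rfl hi
    | succ i => simp

end Supported

/-- A birational parametrization by `ℙᵐ` of the base of the cone `V(f)` whose vertex is the
coordinate point `e₁`: the map `F` is constant along the lines through the vertex, and off `V(v)`
the map `G` is a section of `F` with image in `V(f)` and outside the hyperplane `X 0 = 0`. -/
structure ConeParametrization {k : Type} [Field k] {n : ℕ} (f : MvPolynomial (Fin (n + 2)) k)
    (m : ℕ) where
  F : RatMap k (n + 1) m
  G : RatMap k m (n + 1)
  v : MvPolynomial (Fin (m + 1)) k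
  degV : ℕ
  isHomogeneous_v : v.IsHomogeneous degV
  v_ne_zero : v ≠ 0
  mem_supported : f ∈ supported k {1}ᶜ
  comp_mem_supported : ∀ j, F.comp j ∈ supported k {1}ᶜ
  dvd_sub : ∀ i ≠ 1, f ∣ X i * aeval F.comp (G.comp 0) - X 0 * aeval F.comp (G.comp i)
  eval_eq_zero : ∀ y, eval y v ≠ 0 → eval (fun i => eval y (G.comp i)) f = 0
  eval_comp_zero_ne_zero : ∀ y, eval y v ≠ 0 → eval y (G.comp 0) ≠ 0
  exists_eval_eq_smul : ∀ y, eval y v ≠ 0 →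
    ∃ c : k, c ≠ 0 ∧ (fun j => eval (fun i => eval y (G.comp i)) (F.comp j)) = c • y

namespace ConeParametrization

variable {k : Type} [Field k] {n m d : ℕ} {f : MvPolynomial (Fin (n + 2)) k}

theorem comp_zero_ne_zero [Infinite k] (Φ : ConeParametrization f m) : Φ.G.comp 0 ≠ 0 := by
  obtain ⟨y, hy⟩ := exists_eval_ne_zero Φ.v_ne_zero
  exact fun h => Φ.eval_comp_zero_ne_zero y hy (by rw [h, map_zero])

theorem not_dvd_X_zero [Infinite k] (Φ : ConeParametrization f m) : ¬ f ∣ X 0 := by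
  obtain ⟨y, hy⟩ := exists_eval_ne_zero Φ.v_ne_zero
  intro hdvd
  have h := map_dvd (eval fun i => eval y (Φ.G.comp i)) hdvd
  rw [Φ.eval_eq_zero y hy, zero_dvd_iff, eval_X] at h
  exact Φ.eval_comp_zero_ne_zero y hy h

theorem dehomogenize_v_ne_zero (Φ : ConeParametrization f m) : dehomogenize k m Φ.v ≠ 0 :=
  fun h => Φ.v_ne_zero (eq_zero_of_dehomogenize_eq_zero Φ.isHomogeneous_v h)

theorem exists_affine_point (Φ : ConeParametrization f m) (hf : f.IsHomogeneous d) (t : k)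
    {y : Fin m → k} (hy : eval y (dehomogenize k m Φ.v) ≠ 0) :
    ∃ x : Fin (n + 1) → k, x 0 = t ∧ eval x (dehomogenize k (n + 1) f) = 0 ∧
      ∃ c : k, c ≠ 0 ∧ ∀ j, eval x (dehomogenize k (n + 1) (Φ.F.comp j)) =
        c * (Fin.cons 1 y : Fin (m + 1) → k) j := by
  have hy' : eval (Fin.cons 1 y) Φ.v ≠ 0 := by
    exact (aeval_dehomogenize y Φ.v).symm.trans_ne hy
  let z : Fin (n + 2) → k := fun i => eval (Fin.cons 1 y) (Φ.G.comp i)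
  have hz0 : z 0 ≠ 0 := Φ.eval_comp_zero_ne_zero _ hy'
  obtain ⟨c, hc, hFz⟩ := Φ.exists_eval_eq_smul _ hy'
  let x : Fin (n + 1) → k := Fin.tail ((z 0)⁻¹ • Function.update z 1 (z 0 * t))
  have hx : Fin.cons 1 x = (z 0)⁻¹ • Function.update z 1 (z 0 * t) := by
    rw [← Fin.cons_self_tail ((z 0)⁻¹ • _)]
    congr 1
    simp [hz0]
  have heval {e : ℕ} {q : MvPolynomial (Fin (n + 2)) k} (hq : q.IsHomogeneous e)
      (hqs : q ∈ supported k {1}ᶜ) :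
      eval x (dehomogenize k (n + 1) q) = (z 0)⁻¹ ^ e * eval z q :=
    calc eval x (dehomogenize k (n + 1) q)
        = eval (Fin.cons 1 x) q := aeval_dehomogenize x q
      _ = (z 0)⁻¹ ^ e * eval z q := by
        rw [hx, eval_smul_of_isHomogeneous hq, eval_update_of_mem_supported_compl hqs]
  refine ⟨x, ?_, ?_, (z 0)⁻¹ ^ Φ.F.deg * c, mul_ne_zero (pow_ne_zero _ (inv_ne_zero hz0)) hc,
    fun j => ?_⟩
  · simp [x, Fin.tail, hz0]
  · rw [heval hf Φ.mem_supported, Φ.eval_eq_zero _ hy', mul_zero]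
  · rw [heval (Φ.F.homog j) (Φ.comp_mem_supported j), mul_assoc]
    exact congrArg _ (congrFun hFz j)

theorem not_dvd_dehomogenize_comp_zero [Infinite k] (Φ : ConeParametrization f m)
    (hf : f.IsHomogeneous d) :
    ¬ dehomogenize k (n + 1) f ∣ dehomogenize k (n + 1) (Φ.F.comp 0) := by
  intro hdvd
  obtain ⟨y, hy⟩ := exists_eval_ne_zero Φ.dehomogenize_v_ne_zero
  obtain ⟨x, -, hx, c, hc, hF⟩ := Φ.exists_affine_point hf 0 hy
  refine hc ?_
  simpa [hx, hF] using map_dvd (eval x) hdvd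

variable {κ : Type*} [Field κ] [Algebra k κ] {η : Fin (n + 1) → κ}

/-- The affine coordinates of the image in `ℙᵐ` of the point with affine coordinates `η`. -/
noncomputable def affineCoord (Φ : ConeParametrization f m) (η : Fin (n + 1) → κ) (j : Fin m) : κ :=
  aeval η (dehomogenize k (n + 1) (Φ.F.comp j.succ)) /
    aeval η (dehomogenize k (n + 1) (Φ.F.comp 0))

theorem affineCoord_mem_adjoin (Φ : ConeParametrization f m) (j : Fin m) :
    Φ.affineCoord η j ∈ IntermediateField.adjoin k (Set.range (Fin.tail η)) := by
  have hmem (i : Fin (m + 1)) : aeval η (dehomogenize k (n + 1) (Φ.F.comp i)) ∈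
      IntermediateField.adjoin k (Set.range (Fin.tail η)) := by
    have h := aeval_mem_adjoin_image_of_mem_supported
      (dehomogenize_mem_supported_range_succ (Φ.comp_mem_supported i)) η
    rw [← Set.range_comp] at h
    exact IntermediateField.algebra_adjoin_le_adjoin k _ h
  exact div_mem (hmem _) (hmem _)

variable [Infinite k]

theorem aeval_comp_zero_ne_zero (Φ : ConeParametrization f m) (hf : f.IsHomogeneous d)
    (hη : ∀ q, aeval η q = 0 ↔ dehomogenize k (n + 1) f ∣ q) :
    aeval η (dehomogenize k (n + 1) (Φ.F.comp 0)) ≠ 0 :=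
  mt (hη _).mp (Φ.not_dvd_dehomogenize_comp_zero hf)

theorem aeval_comp_succ (Φ : ConeParametrization f m) (hf : f.IsHomogeneous d)
    (hη : ∀ q, aeval η q = 0 ↔ dehomogenize k (n + 1) f ∣ q) (j : Fin m) :
    aeval η (dehomogenize k (n + 1) (Φ.F.comp j.succ)) =
      aeval η (dehomogenize k (n + 1) (Φ.F.comp 0)) * Φ.affineCoord η j :=
  (mul_div_cancel₀ _ (Φ.aeval_comp_zero_ne_zero hf hη)).symm

theorem algebraicIndependent_cons_affineCoord (Φ : ConeParametrization f m) (hf : f.IsHomogeneous d)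
    (hη : ∀ q, aeval η q = 0 ↔ dehomogenize k (n + 1) f ∣ q) :
    AlgebraicIndependent k (Fin.cons (η 0) (Φ.affineCoord η) : Fin (m + 1) → κ) := by
  let D := dehomogenize k (n + 1) (Φ.F.comp 0)
  have hh : rename Fin.succ (dehomogenize k m Φ.v) ≠ 0 := fun h =>
    Φ.dehomogenize_v_ne_zero
      (rename_injective _ (Fin.succ_injective m) (h.trans (map_zero _).symm))
  refine algebraicIndependent_of_forall_exists_eval_eq (fun q => (hη q).mp)
    (N := Fin.cons D (Fin.cons (X 0 * D) fun j => dehomogenize k (n + 1) (Φ.F.comp j.succ)))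
    (fun i => ?_) hh fun y hy => ?_
  · cases i using Fin.cases with
    | zero => simp [mul_comm]
    | succ i => simpa using Φ.aeval_comp_succ hf hη i
  · rw [eval_rename] at hy
    obtain ⟨x, hx0, hx, c, hc, hF⟩ := Φ.exists_affine_point hf (y 0) hy
    refine ⟨x, hx, by simpa [D, hF] using hc, fun i => ?_⟩
    cases i using Fin.cases with
    | zero => simp [hx0, mul_comm]
    | succ i => simp [D, hF]

theorem tail_mem_adjoin_affineCoord (Φ : ConeParametrization f m) (hf : f.IsHomogeneous d)
    (hη : ∀ q, aeval η q = 0 ↔ dehomogenize k (n + 1) f ∣ q) (i : Fin n) :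
    Fin.tail η i ∈ IntermediateField.adjoin k (Set.range (Φ.affineCoord η)) := by
  let D := aeval η (dehomogenize k (n + 1) (Φ.F.comp 0))
  have hD : D ≠ 0 := Φ.aeval_comp_zero_ne_zero hf hη
  have hG (a : Fin (n + 2)) :
      aeval η (dehomogenize k (n + 1) (aeval Φ.F.comp (Φ.G.comp a))) = D ^ Φ.G.deg *
        aeval (Φ.affineCoord η) (dehomogenize k m (Φ.G.comp a)) := by
    rw [← aeval_eq_pow_mul_aeval_dehomogenize (Φ.G.homog a)
      (c := fun j => aeval η (dehomogenize k (n + 1) (Φ.F.comp j))) (Φ.aeval_comp_succ hf hη)]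
    simp only [comp_aeval_apply]
  have hmul : aeval (Φ.affineCoord η) (dehomogenize k m (Φ.G.comp 0)) * η i.succ =
      aeval (Φ.affineCoord η) (dehomogenize k m (Φ.G.comp i.succ.succ)) := by
    have h := (hη _).mpr
      (map_dvd (dehomogenize k (n + 1)) (Φ.dvd_sub i.succ.succ (by simp [Fin.ext_iff])))
    simp only [map_sub, map_mul, hG, dehomogenize_X_zero, dehomogenize_X_succ, aeval_X,
      one_mul] at h
    refine mul_left_cancel₀ (pow_ne_zero Φ.G.deg hD) ?_
    linear_combination h
  have hG0 : aeval (Φ.affineCoord η) (dehomogenize k m (Φ.G.comp 0)) ≠ 0 := by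
    have hφ : AlgebraicIndependent k (Φ.affineCoord η) :=
      (Φ.algebraicIndependent_cons_affineCoord hf hη).comp Fin.succ (Fin.succ_injective m)
    exact fun h => Φ.comp_zero_ne_zero
      (eq_zero_of_dehomogenize_eq_zero (Φ.G.homog 0) ((map_eq_zero_iff _ hφ).mp h))
  have hmem (q : MvPolynomial (Fin m) k) : aeval (Φ.affineCoord η) q ∈
      IntermediateField.adjoin k (Set.range (Φ.affineCoord η)) :=
    IntermediateField.algebra_adjoin_le_adjoin k _ (aeval_mem_adjoin_range _ q)
  rw [Fin.tail, eq_div_of_mul_eq hG0 ((mul_comm _ _).trans hmul)]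
  exact div_mem (hmem _) (hmem _)

theorem adjoin_range_affineCoord (Φ : ConeParametrization f m) (hf : f.IsHomogeneous d)
    (hη : ∀ q, aeval η q = 0 ↔ dehomogenize k (n + 1) f ∣ q) :
    IntermediateField.adjoin k (Set.range (Φ.affineCoord η)) =
      IntermediateField.adjoin k (Set.range (Fin.tail η)) := by
  apply le_antisymm <;> rw [IntermediateField.adjoin_le_iff] <;> rintro _ ⟨j, rfl⟩
  · exact Φ.affineCoord_mem_adjoin j
  · exact Φ.tail_mem_adjoin_affineCoord hf hη j

theorem trdeg_eq (Φ : ConeParametrization f m) (hf : f.IsHomogeneous d)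
    (hη : ∀ q, aeval η q = 0 ↔ dehomogenize k (n + 1) f ∣ q)
    (htop : IntermediateField.adjoin k (Set.range η) = ⊤) : Algebra.trdeg k κ = m + 1 := by
  have hgen : IntermediateField.adjoin k
      (Set.range (Fin.cons (η 0) (Φ.affineCoord η) : Fin (m + 1) → κ)) = ⊤ := by
    rw [← htop, ← Fin.cons_self_tail η, Fin.range_cons, Fin.range_cons,
      Set.insert_eq, Set.insert_eq, IntermediateField.adjoin_union, IntermediateField.adjoin_union,
      Fin.cons_self_tail, Φ.adjoin_range_affineCoord hf hη]
  have halg : Algebra.IsAlgebraic (Algebra.adjoin k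
      (Set.range (Fin.cons (η 0) (Φ.affineCoord η) : Fin (m + 1) → κ))) κ :=
    ⟨fun x => isAlgebraic_of_mem_adjoin (hgen ▸ IntermediateField.mem_top)⟩
  have hbasis :=
    (Φ.algebraicIndependent_cons_affineCoord hf hη).isTranscendenceBasis_iff_isAlgebraic.mpr halg
  simpa using hbasis.lift_cardinalMk_eq_trdeg.symm

end ConeParametrization

theorem ConeParametrization.nonempty_cremonaData {k : Type} [Field k] [CharZero k] {n m d : ℕ}
    {f : MvPolynomial (Fin (n + 2)) k} (Φ : ConeParametrization f m) (hf : Prime f)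
    (hfd : f.IsHomogeneous d) : Nonempty (CremonaData f (X 1)) := by
  have hfX := Φ.not_dvd_X_zero
  have hp : Prime (dehomogenize k (n + 1) f) := prime_dehomogenize hf hfd hfX
  have hprime : (Ideal.span {dehomogenize k (n + 1) f}).IsPrime :=
    (Ideal.span_singleton_prime hp.ne_zero).mpr hp
  have hη := aeval_genericZero_eq_zero_iff (p := dehomogenize k (n + 1) f)
  obtain rfl : n = m + 1 := by
    have h := (trdeg_residueField_span_singleton hp).symm.trans
      (Φ.trdeg_eq hfd hη adjoin_range_genericZero)
    exact_mod_cast h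
  exact nonempty_cremonaData_of_adjoin_genericZero_eq hf hfd hfX rfl
    (dehomogenize_mem_supported_range_succ Φ.mem_supported)
    (Φ.algebraicIndependent_cons_affineCoord hfd hη) (Φ.adjoin_range_affineCoord hfd hη)

theorem exists_linearMap_eval_eq {k σ : Type*} [Field k] {h : MvPolynomial σ k}
    (hh : h.IsHomogeneous 1) : ∃ ℓ : (σ → k) →ₗ[k] k, ∀ x, eval x h = ℓ x := by
  rw [← mem_homogeneousSubmodule, homogeneousSubmodule_one_eq_span_X] at hh
  induction hh using Submodule.span_induction with
  | mem q hq =>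
    obtain ⟨i, rfl⟩ := hq
    exact ⟨LinearMap.proj i, fun x => by simp⟩
  | zero => exact ⟨0, fun x => by simp⟩
  | add p q _ _ hp hq =>
    obtain ⟨μ, hμ⟩ := hp
    obtain ⟨ν, hν⟩ := hq
    exact ⟨μ + ν, fun x => by simp [hμ, hν]⟩
  | smul a p _ hp =>
    obtain ⟨μ, hμ⟩ := hp
    exact ⟨a • μ, fun x => by simp [hμ, smul_eval]⟩

theorem exists_basis_adapted {k V : Type*} [Field k] [AddCommGroup V] [Module k V] {n : ℕ}
    (hV : Module.finrank k V = n + 2) {ℓ : V →ₗ[k] k} {e x : V} (he : ℓ e ≠ 0) (hx : ℓ x = 0)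
    (hx0 : x ≠ 0) : ∃ b : Module.Basis (Fin (n + 2)) k V,
      b 1 = e ∧ (∀ i ≠ 1, ℓ (b i) = 0) ∧ b.repr x 0 ≠ 0 := by
  have : FiniteDimensional k V := Module.finite_of_finrank_pos (by omega)
  have hker : Module.finrank k (LinearMap.ker ℓ) = n + 1 := by
    have hsurj : LinearMap.range ℓ = ⊤ := LinearMap.range_eq_top.mpr
      (LinearMap.surjective (by rintro rfl; exact he rfl))
    have hrank := LinearMap.finrank_range_add_finrank_ker ℓ
    rw [hsurj, finrank_top, Module.finrank_self] at hrank
    omega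
  let c := Module.finBasisOfFinrankEq k (LinearMap.ker ℓ) hker
  let b := Module.Basis.mkFinCons e c
    (fun a y hy h => by
      have h' := congrArg ℓ h
      rw [map_add, map_smul, LinearMap.mem_ker.mp hy, add_zero, map_zero] at h'
      exact (smul_eq_zero.mp h').resolve_right he)
    (fun z => ⟨-(ℓ z / ℓ e), by simp [he]⟩)
  obtain ⟨i, hi⟩ : ∃ i : Fin (n + 1), b.repr x i.succ ≠ 0 := by
    by_contra! h
    have hxe : b.repr x 0 • e = x := by
      simpa [Fin.sum_univ_succ, h, b] using b.sum_repr x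
    have hℓ := congrArg ℓ hxe
    rw [map_smul, hx, smul_eq_zero, or_iff_left he] at hℓ
    exact hx0 (by rw [← hxe, hℓ, zero_smul])
  let τ : Equiv.Perm (Fin (n + 2)) := Equiv.swap 0 1 * Equiv.swap 1 i.succ
  have hswap : Equiv.swap 1 i.succ 0 = 0 :=
    Equiv.swap_apply_of_ne_of_ne zero_ne_one i.succ_ne_zero.symm
  refine ⟨b.reindex τ, ?_, fun j hj => ?_, ?_⟩
  · have hτ : τ.symm 1 = 0 := by simp [Equiv.symm_apply_eq, τ, hswap]
    simp [hτ, b]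
  · rw [Module.Basis.reindex_apply]
    obtain ⟨l, hl⟩ : ∃ l : Fin (n + 1), l.succ = τ.symm j := by
      refine Fin.exists_succ_eq.mpr fun h => hj ?_
      rw [← Equiv.apply_symm_apply τ j, h]
      simp [τ, hswap]
    simp [← hl, b]
  · have hτ : τ.symm 0 = i.succ := by simp [Equiv.symm_apply_eq, τ]
    rwa [Module.Basis.repr_reindex_apply, hτ]

theorem exists_linearEquiv_adapted {k : Type*} [Field k] {n : ℕ} {h : MvPolynomial (Fin (n + 2)) k}
    (hh : h.IsHomogeneous 1) {p x : Fin (n + 2) → k} (hp : eval p h ≠ 0) (hx : eval x h = 0)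
    (hx0 : x ≠ 0) : ∃ L : (Fin (n + 2) → k) ≃ₗ[k] Fin (n + 2) → k,
      L (Pi.single 1 1) = p ∧ (∀ z, eval (L z) h = 0 ↔ z 1 = 0) ∧ L.symm x 0 ≠ 0 := by
  obtain ⟨ℓ, hℓ⟩ := exists_linearMap_eval_eq hh
  rw [hℓ] at hp hx
  obtain ⟨b, hb1, hb, hb0⟩ := exists_basis_adapted (Module.finrank_fin_fun k) hp hx hx0
  refine ⟨b.equivFun.symm, by simp [hb1], fun z => ?_, hb0⟩
  have hsum : ℓ (b.equivFun.symm z) = z 1 * ℓ p := by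
    simp only [b.equivFun_symm_apply, map_sum, map_smul, smul_eq_mul]
    rw [Finset.sum_eq_single 1 (fun i _ hi => by rw [hb i hi, mul_zero]) (by simp), hb1]
  rw [hℓ, hsum, mul_eq_zero, or_iff_left hp]

section Drop

variable {k σ : Type*} [Field k] [DecidableEq σ]

/-- The linear projection which replaces the coordinate `i` by zero. -/
def dropCoord (k : Type*) [Field k] (i : σ) : (σ → k) →ₗ[k] σ → k :=
  LinearMap.pi (Function.update LinearMap.proj i 0)

theorem dropCoord_apply (i : σ) (x : σ → k) : dropCoord k i x = Function.update x i 0 := by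
  ext j
  rcases eq_or_ne j i with rfl | hj
  · simp [dropCoord]
  · simp [dropCoord, hj]

theorem compLinear_dropCoord_mem_supported [Fintype σ] (i : σ) (q : MvPolynomial σ k) :
    compLinear (dropCoord k i) q ∈ supported k {i}ᶜ :=
  compLinear_mem_supported _ (by rw [dropCoord_apply, Pi.single, Function.update_idem]; simp) q

theorem mem_supported_compl_of_eval_add_smul_single [Finite σ] [IsAlgClosed k] {i : σ}
    {f : MvPolynomial σ k} (hf : Prime f)
    (h : ∀ x (s : k), eval x f = 0 → eval (x + s • Pi.single i 1) f = 0) :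
    f ∈ supported k {i}ᶜ := by
  have := Fintype.ofFinite σ
  have hupdate (x : σ → k) (s : k) (hx : eval x f = 0) : eval (Function.update x i s) f = 0 := by
    have hadd : x + (s - x i) • Pi.single i 1 = Function.update x i s := by
      ext j
      rcases eq_or_ne j i with rfl | hj <;> simp [*]
    exact hadd ▸ h x (s - x i) hx
  have hdvd : f ∣ compLinear (dropCoord k i) f := by
    refine dvd_of_forall_eval_eq_zero hf fun x hx => ?_
    rw [eval_compLinear, dropCoord_apply]
    exact hupdate x 0 hx
  obtain ⟨x, hx⟩ := exists_eval_ne_zero hf.ne_zero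
  refine mem_supported_of_dvd hdvd (fun h0 => hx ?_) (compLinear_dropCoord_mem_supported i f)
  have hx0 := congrArg (eval x) h0
  rw [eval_compLinear, dropCoord_apply, map_zero] at hx0
  simpa using hupdate _ (x i) hx0

end Drop

/-- A birational parametrization by `ℙᵐ` of the hyperplane section `V(f) ∩ V(h)` in terms of
homogeneous coordinate vectors: `F` is a birational map with inverse `G`, and the two are mutually
inverse off `V(u)` and `V(v)`. -/
structure SectionParametrization {k : Type} [Field k] {n : ℕ} (f h : MvPolynomial (Fin (n + 1)) k)
    (m : ℕ) where
  F : RatMap k n m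
  G : RatMap k m n
  u : MvPolynomial (Fin (n + 1)) k
  v : MvPolynomial (Fin (m + 1)) k
  degV : ℕ
  isHomogeneous_v : v.IsHomogeneous degV
  v_ne_zero : v ≠ 0
  exists_eval_u_ne_zero : ∃ x, eval x f = 0 ∧ eval x h = 0 ∧ eval x u ≠ 0
  exists_eval_G_eq_smul : ∀ x ≠ 0, eval x f = 0 → eval x h = 0 → eval x u ≠ 0 →
    ∃ c : k, (fun i => eval (fun j => eval x (F.comp j)) (G.comp i)) = c • x
  eval_G_ne_zero : ∀ y, eval y v ≠ 0 → (fun i => eval y (G.comp i)) ≠ 0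
  eval_eq_zero : ∀ y, eval y v ≠ 0 → eval (fun i => eval y (G.comp i)) f = 0
  eval_section_eq_zero : ∀ y, eval y v ≠ 0 → eval (fun i => eval y (G.comp i)) h = 0
  exists_eval_F_eq_smul : ∀ y, eval y v ≠ 0 →
    ∃ c : k, c ≠ 0 ∧ (fun j => eval (fun i => eval y (G.comp i)) (F.comp j)) = c • y

theorem ProjSp.RatMap.exists_eval_eq_smul {k : Type} [Field k] {n m : ℕ} {F : RatMap k n m}
    {G : RatMap k m n} {x : Fin (n + 1) → k} (hx : x ≠ 0)
    (hF : F.Defined (Projectivization.mk k x hx))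
    (hG : G.Defined (F.app (Projectivization.mk k x hx)))
    (hGF : G.app (F.app (Projectivization.mk k x hx)) = Projectivization.mk k x hx) :
    ∃ c : k, c ≠ 0 ∧ (fun i => eval (fun j => eval x (F.comp j)) (G.comp i)) = c • x := by
  have hFx := (RatMap.defined_mk_iff F hx).mp hF
  rw [RatMap.app_mk F hx hFx] at hG hGF
  have hGx := (RatMap.defined_mk_iff G hFx).mp hG
  rw [RatMap.app_mk G hFx hGx, Projectivization.mk_eq_mk_iff'] at hGF
  obtain ⟨c, hc⟩ := hGF
  exact ⟨c, fun h0 => hGx (by rw [← hc, h0, zero_smul]), hc.symm⟩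

namespace SectionParametrization

variable {k : Type} [Field k] {n m : ℕ}

theorem nonempty_of_isBirationalOn {d e : ℕ} {f h : MvPolynomial (Fin (n + 1)) k}
    (hf : f.IsHomogeneous d) (hh : h.IsHomogeneous e) {F : RatMap k n m} {G : RatMap k m n}
    (hFG : IsBirationalOn k F G (zeros k f ∩ zeros k h) Set.univ) :
    Nonempty (SectionParametrization f h m) := by
  obtain ⟨u, v, du, dv, hu, hv, hfhu, hunivv, hF, hG⟩ := hFG
  obtain ⟨x₀, ⟨hx₀f, hx₀h⟩, hx₀u⟩ := Set.not_subset.mp hfhu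
  obtain ⟨y₀, -, hy₀⟩ := Set.not_subset.mp hunivv
  have hy {y : Fin (m + 1) → k} (hyv : eval y (X 0 * v) ≠ 0) :
      ∃ hy : y ≠ 0, Projectivization.mk k y hy ∈ Set.univ \ zeros k v := by
    rw [map_mul, eval_X, mul_ne_zero_iff] at hyv
    have hy0 : y ≠ 0 := fun h0 => hyv.1 (congrFun h0 0)
    exact ⟨hy0, trivial, mt (mk_mem_zeros hv hy0).mp hyv.2⟩
  have hGy {y : Fin (m + 1) → k} (hyv : eval y (X 0 * v) ≠ 0) :
      ∃ hGy : (fun i => eval y (G.comp i)) ≠ 0,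
        Projectivization.mk k _ hGy ∈ zeros k f ∩ zeros k h := by
    obtain ⟨hy0, hmem⟩ := hy hyv
    obtain ⟨hdef, happ, -⟩ := hG _ hmem
    have hGy := (RatMap.defined_mk_iff G hy0).mp hdef
    exact ⟨hGy, RatMap.app_mk G hy0 hGy ▸ happ⟩
  exact ⟨{
    F, G, u
    v := X 0 * v
    degV := _
    isHomogeneous_v := (isHomogeneous_X k 0).mul hv
    v_ne_zero := mul_ne_zero (X_ne_zero 0) fun h0 => hy₀ (by simp [zeros, h0])
    exists_eval_u_ne_zero := ⟨x₀.rep, hx₀f, hx₀h, hx₀u⟩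
    exists_eval_G_eq_smul x hx hxf hxh hxu := by
      obtain ⟨hdef, -, hdef_image, happ⟩ := hF (Projectivization.mk k x hx)
        ⟨⟨(mk_mem_zeros hf hx).mpr hxf, (mk_mem_zeros hh hx).mpr hxh⟩,
          mt (mk_mem_zeros hu hx).mp hxu⟩
      obtain ⟨c, -, hc⟩ := RatMap.exists_eval_eq_smul hx hdef hdef_image happ
      exact ⟨c, hc⟩
    eval_G_ne_zero y hyv := (hGy hyv).1
    eval_eq_zero y hyv := by
      obtain ⟨hne, hmem, -⟩ := hGy hyv
      exact (mk_mem_zeros hf hne).mp hmem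
    eval_section_eq_zero y hyv := by
      obtain ⟨hne, -, hmem⟩ := hGy hyv
      exact (mk_mem_zeros hh hne).mp hmem
    exists_eval_F_eq_smul y hyv := by
      obtain ⟨hy0, hmem⟩ := hy hyv
      obtain ⟨hdef, -, hdef_image, happ⟩ := hG _ hmem
      exact RatMap.exists_eval_eq_smul hy0 hdef hdef_image happ }⟩

/-- The parametrization in the linear coordinates given by `L`. -/
noncomputable def changeCoordinates {f h : MvPolynomial (Fin (n + 1)) k}
    (Φ : SectionParametrization f h m) (L : (Fin (n + 1) → k) ≃ₗ[k] Fin (n + 1) → k) :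
    SectionParametrization (compLinear L.toLinearMap f) (compLinear L.toLinearMap h) m where
  F := ⟨Φ.F.deg, fun j => compLinear L.toLinearMap (Φ.F.comp j),
    fun j => isHomogeneous_compLinear _ (Φ.F.homog j)⟩
  G := ⟨_, fun i => aeval Φ.G.comp (compLinear L.symm.toLinearMap (X i)),
    fun i => (isHomogeneous_compLinear _ (isHomogeneous_X k i)).aeval _ Φ.G.homog⟩
  u := compLinear L.toLinearMap Φ.u
  v := Φ.v
  degV := Φ.degV
  isHomogeneous_v := Φ.isHomogeneous_v
  v_ne_zero := Φ.v_ne_zero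
  exists_eval_u_ne_zero := by
    obtain ⟨x, hx⟩ := Φ.exists_eval_u_ne_zero
    exact ⟨L.symm x, by simpa [eval_compLinear] using hx⟩
  exists_eval_G_eq_smul x hx hxf hxh hxu := by
    rw [eval_compLinear] at hxf hxh hxu
    obtain ⟨c, hc⟩ := Φ.exists_eval_G_eq_smul (L x) (L.map_ne_zero_iff.mpr hx) hxf hxh hxu
    refine ⟨c, ?_⟩
    simp only [eval_aeval_compLinear_X, eval_compLinear, LinearEquiv.coe_coe, hc, map_smul,
      LinearEquiv.symm_apply_apply]
  eval_G_ne_zero y hy := by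
    rw [eval_aeval_compLinear_X]
    exact L.symm.map_ne_zero_iff.mpr (Φ.eval_G_ne_zero y hy)
  eval_eq_zero y hy := by
    rw [eval_aeval_compLinear_X]
    simpa [eval_compLinear] using Φ.eval_eq_zero y hy
  eval_section_eq_zero y hy := by
    rw [eval_aeval_compLinear_X]
    simpa [eval_compLinear] using Φ.eval_section_eq_zero y hy
  exists_eval_F_eq_smul y hy := by
    rw [eval_aeval_compLinear_X]
    simpa [eval_compLinear] using Φ.exists_eval_F_eq_smul y hy

end SectionParametrization

namespace SectionParametrization

variable {k : Type} [Field k] {n m : ℕ}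

section Cone

variable {f h : MvPolynomial (Fin (n + 2)) k} (Φ : SectionParametrization f h m)

theorem dvd_sub [IsAlgClosed k] (hf : Prime f) (hh : ∀ z, eval z h = 0 ↔ z 1 = 0)
    (hsupp : f ∈ supported k {1}ᶜ) {i : Fin (n + 2)} (hi : i ≠ 1) : f ∣
      X i * aeval (fun j => compLinear (dropCoord k 1) (Φ.F.comp j)) (Φ.G.comp 0) -
        X 0 * aeval (fun j => compLinear (dropCoord k 1) (Φ.F.comp j)) (Φ.G.comp i) := by
  have hu : ¬ f ∣ compLinear (dropCoord k 1) Φ.u := by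
    obtain ⟨x, hxf, hxh, hxu⟩ := Φ.exists_eval_u_ne_zero
    intro hdvd
    have h0 := map_dvd (eval x) hdvd
    rw [hxf, zero_dvd_iff, eval_compLinear, dropCoord_apply,
      Function.update_eq_self_iff.mpr ((hh x).mp hxh).symm] at h0
    exact hxu h0
  refine (hf.dvd_or_dvd (dvd_of_forall_eval_eq_zero hf fun x hx => ?_)).resolve_left hu
  set z := Function.update x 1 0 with hz
  have hz0 : z 0 = x 0 := Function.update_of_ne zero_ne_one 0 x
  have hzi : z i = x i := Function.update_of_ne hi 0 x
  simp only [map_mul, map_sub, eval_X, eval_aeval, eval_compLinear, dropCoord_apply, ← hz, ← hz0,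
    ← hzi]
  rw [mul_eq_zero, or_iff_not_imp_left]
  intro hzu
  rcases eq_or_ne z 0 with hz_zero | hz_ne
  · simp [hz_zero]
  obtain ⟨c, hc⟩ := Φ.exists_eval_G_eq_smul z hz_ne
    (by rwa [eval_update_of_mem_supported_compl hsupp]) ((hh z).mpr (by simp [hz])) hzu
  have hG (a : Fin (n + 2)) : _ = c * z a := congrFun hc a
  rw [hG, hG]
  ring

/-- Extends the inverse of a parametrization of the hyperplane section `X 1 = 0` of a cone along the
lines through the vertex. -/
noncomputable def coneParametrization [IsAlgClosed k] (hf : Prime f)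
    (hh : ∀ z, eval z h = 0 ↔ z 1 = 0) (hsupp : f ∈ supported k {1}ᶜ) (hG : Φ.G.comp 0 ≠ 0) :
    ConeParametrization f m where
  F := ⟨Φ.F.deg, fun j => compLinear (dropCoord k 1) (Φ.F.comp j),
    fun j => isHomogeneous_compLinear _ (Φ.F.homog j)⟩
  G := Φ.G
  v := Φ.v * Φ.G.comp 0
  degV := Φ.degV + Φ.G.deg
  isHomogeneous_v := Φ.isHomogeneous_v.mul (Φ.G.homog 0)
  v_ne_zero := mul_ne_zero Φ.v_ne_zero hG
  mem_supported := hsupp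
  comp_mem_supported j := compLinear_dropCoord_mem_supported 1 (Φ.F.comp j)
  dvd_sub i hi := Φ.dvd_sub hf hh hsupp hi
  eval_eq_zero y hy := Φ.eval_eq_zero y (left_ne_zero_of_mul (map_mul (eval y) _ _ ▸ hy))
  eval_comp_zero_ne_zero y hy := right_ne_zero_of_mul (map_mul (eval y) _ _ ▸ hy)
  exists_eval_eq_smul y hy := by
    have hyv : eval y Φ.v ≠ 0 := left_ne_zero_of_mul (map_mul (eval y) _ _ ▸ hy)
    have hG1 : eval y (Φ.G.comp 1) = 0 := (hh _).mp (Φ.eval_section_eq_zero y hyv)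
    have hdrop : dropCoord k 1 (fun i => eval y (Φ.G.comp i)) = fun i => eval y (Φ.G.comp i) := by
      rw [dropCoord_apply, ← hG1]
      exact Function.update_eq_self 1 _
    simp only [eval_compLinear, hdrop]
    exact Φ.exists_eval_F_eq_smul y hyv

end Cone

theorem nonempty_cremonaData [IsAlgClosed k] [CharZero k] {d : ℕ}
    {f h : MvPolynomial (Fin (n + 2)) k} (Φ : SectionParametrization f h m) (hf : Prime f)
    (hfd : f.IsHomogeneous d) (hh : h.IsHomogeneous 1) {p : Fin (n + 2) → k} (hp : eval p h ≠ 0)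
    (hcone : ∀ x (s : k), eval x f = 0 → eval (x + s • p) f = 0) :
    Nonempty (CremonaData f (X 1)) := by
  obtain ⟨y, hy⟩ := exists_eval_ne_zero Φ.v_ne_zero
  obtain ⟨L, hLp, hLh, hLy⟩ := exists_linearEquiv_adapted hh hp
    (Φ.eval_section_eq_zero y hy) (Φ.eval_G_ne_zero y hy)
  have hf' := prime_compLinear L hf
  have hsupp : compLinear L.toLinearMap f ∈ supported k {1}ᶜ :=
    mem_supported_compl_of_eval_add_smul_single hf' fun z s hz => by
      rw [eval_compLinear, LinearEquiv.coe_coe] at hz ⊢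
      rw [map_add, map_smul, hLp]
      exact hcone _ _ hz
  have hG : (Φ.changeCoordinates L).G.comp 0 ≠ 0 := fun h0 => by
    have hzero := congrFun (eval_aeval_compLinear_X L.symm.toLinearMap y Φ.G.comp) 0
    exact hLy (hzero.symm.trans ((congrArg (eval y) h0).trans (map_zero _)))
  obtain ⟨Ψ⟩ := ((Φ.changeCoordinates L).coneParametrization hf'
    (fun z => by rw [eval_compLinear, LinearEquiv.coe_coe, hLh]) hsupp hG).nonempty_cremonaData
    hf' (isHomogeneous_compLinear _ hfd)
  exact Ψ.nonempty_of_compLinear L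

theorem dimension_ne_zero [Infinite k] {f h : MvPolynomial (Fin (n + 1)) k}
    (Φ : SectionParametrization f h m) (hh : h.IsHomogeneous 1) {p : Fin (n + 1) → k}
    (hp : eval p h ≠ 0) : n ≠ 0 := by
  rintro rfl
  obtain ⟨y, hy⟩ := exists_eval_ne_zero Φ.v_ne_zero
  set x : Fin 1 → k := fun i => eval y (Φ.G.comp i)
  have hx0 : x 0 ≠ 0 := fun h0 => Φ.eval_G_ne_zero y hy (by ext i; rwa [Fin.fin_one_eq_zero i])
  have hpx : p = (p 0 / x 0) • x := by
    ext i
    rw [Fin.fin_one_eq_zero i, Pi.smul_apply, smul_eq_mul, div_mul_cancel₀ _ hx0]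
  rw [hpx, eval_smul_of_isHomogeneous hh, Φ.eval_section_eq_zero y hy, mul_zero] at hp
  exact hp rfl

end SectionParametrization

theorem ProjSp.IsConeWithVertex.eval_add_smul_rep_eq_zero {k : Type} [Field k] {n d : ℕ}
    {f : MvPolynomial (Fin (n + 1)) k} {p : ProjSp k n} (hcone : IsConeWithVertex k (zeros k f) p)
    (hf : f.IsHomogeneous d) {x : Fin (n + 1) → k} (hx : eval x f = 0) (s : k) :
    eval (x + s • p.rep) f = 0 := by
  have hsmul (a : k) : eval (a • p.rep) f = 0 := by
    rw [eval_smul_of_isHomogeneous hf, show eval p.rep f = 0 from hcone.1, mul_zero]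
  rcases eq_or_ne x 0 with rfl | hx0
  · simpa using hsmul s
  rcases eq_or_ne (x + s • p.rep) 0 with h0 | h0
  · simpa [h0] using hsmul 0
  refine (mk_mem_zeros hf h0).mp (hcone.2 _ ((mk_mem_zeros hf hx0).mpr hx) ?_)
  simp only [lineThrough, Set.mem_ofPred_eq]
  rw [Projectivization.submodule_mk, Projectivization.submodule_mk, Projectivization.submodule_eq,
    Submodule.span_singleton_le_iff_mem, add_comm x]
  exact Submodule.add_mem_sup (Submodule.smul_mem _ _ (Submodule.mem_span_singleton_self _))
    (Submodule.mem_span_singleton_self _)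

/-- Theorem `th:cone`, second part.
Every irreducible reduced divisorial cone in `ℙⁿ` over a rational variety — i.e. a
cone whose (general) hyperplane section `C = S ∩ H`, for a hyperplane `H` missing
the vertex, is a rational variety — is Cremona equivalent to a hyperplane. -/
theorem cone_over_rational_cremonaEquivalent_to_hyperplane
    (k : Type) [Field k] [IsAlgClosed k] [CharZero k] (n : ℕ)
    (S : Set (ProjSp k n)) (p : ProjSp k n) (H : Set (ProjSp k n))
    (hS : IsIrredDivisor k S) (hcone : IsConeWithVertex k S p)
    (hH : IsHyperplane k H) (hp : p ∉ H)
    (hrat : IsRationalVariety k (S ∩ H)) :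
    ∃ H' : Set (ProjSp k n), IsHyperplane k H' ∧ CremonaEquivalent k S H' := by
  obtain ⟨d, f, -, hfd, hf, rfl⟩ := hS
  obtain ⟨h, -, hh, rfl⟩ := hH
  obtain ⟨m, F, G, hFG⟩ := hrat
  obtain ⟨Φ⟩ := SectionParametrization.nonempty_of_isBirationalOn hfd hh hFG
  obtain ⟨n, rfl⟩ := Nat.exists_eq_succ_of_ne_zero (Φ.dimension_ne_zero hh hp)
  obtain ⟨Ψ⟩ := Φ.nonempty_cremonaData hf.prime hfd hh hp
    fun x s hx => hcone.eval_add_smul_rep_eq_zero hfd hx s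
  have hX : (zeros k (X 1 : MvPolynomial (Fin (n + 2)) k)).Nonempty :=
    ⟨Projectivization.mk k (Pi.single 0 1) (by simp),
      (mk_mem_zeros (isHomogeneous_X k 1) _).mpr (by simp)⟩
  exact ⟨_, ⟨X 1, X_ne_zero 1, isHomogeneous_X k 1, rfl⟩,
    Ψ.cremonaEquivalent hf.prime X_prime hfd (isHomogeneous_X k 1) ⟨p, hcone.1⟩ hX⟩
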